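/- arXiv:2110.07854 — 3 statements merged into one kernel-verified Lean document; each statement's English description precedes it below -/
import Mathlib

section
/- For every prime p, every real β > 0, and every integer N ≥ 1, Σ_{k=1}^{N} [Z_{N−k}(pℤ_p,β)/(N−k)!]·[Z_k(ℤ_p,β)/(k−1)!] = p · Σ_{k=1}^{N} [Z_{N−k}(ℤ_p,β)/(N−k)!]·[Z_k(pℤ_p,β)/(k−1)!]. -/
open MeasureTheory
open scoped LinearAlgebra.Projectivization

namespace LogCoulomb

noncomputable section

/-! ### The projective line over `ℚ_p`, its spherical metric and `PGL₂`-invariant measure -/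

variable (p : ℕ) [Fact p.Prime]

instance : MeasurableSpace ℚ_[p] := borel _
instance : BorelSpace ℚ_[p] := ⟨rfl⟩

/-- The projective line over `ℚ_p`. -/
abbrev P1 := ℙ ℚ_[p] (Fin 2 → ℚ_[p])

instance : TopologicalSpace (P1 p) :=
  inferInstanceAs (TopologicalSpace (Quotient _))

instance : MeasurableSpace (P1 p) := borel _
instance : BorelSpace (P1 p) := ⟨rfl⟩

/-- Spherical distance on homogeneous coordinates:
`δ((x₀,x₁),(y₀,y₁)) = |x₀y₁ - x₁y₀| / (max(|x₀|,|x₁|) ⬝ max(|y₀|,|y₁|))`. -/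
def sdelta (x y : Fin 2 → ℚ_[p]) : ℝ :=
  ‖x 0 * y 1 - x 1 * y 0‖ / (max ‖x 0‖ ‖x 1‖ * max ‖y 0‖ ‖y 1‖)

/-- The spherical metric on `ℙ¹(ℚ_p)`, defined via the canonical representatives. -/
def pdelta (ξ η : P1 p) : ℝ := sdelta p ξ.rep η.rep

open Classical in
/-- The action of a matrix on `ℙ¹(ℚ_p)`: `[x₀:x₁] ↦ [a x₀ + b x₁ : c x₀ + d x₁]`
(well-defined, and given by the first branch of the `if`, whenever `A` is invertible). -/
def mobius (A : Matrix (Fin 2) (Fin 2) ℚ_[p]) (ξ : P1 p) : P1 p :=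
  if h : A.mulVec ξ.rep ≠ 0 then Projectivization.mk ℚ_[p] (A.mulVec ξ.rep) h else ξ

/-- `ν` is invariant under the action of `GL₂(ℤ_p)` on `ℙ¹(ℚ_p)`; membership of the matrix
entries in `ℤ_p`, and invertibility of the matrix over `ℤ_p`, are phrased via the `p`-adic
norm on `ℚ_p`. -/
def IsGLInvariant (ν : Measure (P1 p)) : Prop :=
  ∀ A : Matrix (Fin 2) (Fin 2) ℚ_[p],
    (∀ i j, ‖A i j‖ ≤ 1) → ‖A.det‖ = 1 →
      ∀ M : Set (P1 p), MeasurableSet M → ν (mobius p A '' M) = ν M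

/-- The embedding `ι : ℚ_p → ℙ¹(ℚ_p)`, `x ↦ [x : 1]`. -/
def iota (x : ℚ_[p]) : P1 p :=
  Projectivization.mk ℚ_[p] ![x, 1] (by
    intro h
    have h1 := congrFun h 1
    simp at h1)

/-! ### Canonical partition functions -/

/-- The pairs `(i,j)` with `i < j`. -/
def pairs (N : ℕ) : Finset (Fin N × Fin N) := Finset.univ.filter fun q => q.1 < q.2

/-- The closed unit ball `ℤ_p = R` inside `ℚ_p`. -/
def Zball : Set ℚ_[p] := {x | ‖x‖ ≤ 1}

/-- The open unit ball `pℤ_p = P` inside `ℚ_p`. -/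
def Pball : Set ℚ_[p] := {x | ‖x‖ < 1}

/-- The one-component canonical partition function
`Z_N(X, β) = ∫_{X^N} ∏_{i<j} |x_i - x_j|^β dμ^N` (as a Bochner integral, whether or not it
converges absolutely). -/
def ZN (μ : Measure ℚ_[p]) [SigmaFinite μ] (X : Set ℚ_[p]) (N : ℕ) (β : ℂ) : ℂ :=
  ∫ x : Fin N → ℚ_[p], ∏ q ∈ pairs N, (‖x q.1 - x q.2‖ : ℂ) ^ β
    ∂(Measure.pi fun _ => μ.restrict X)

/-- The multivariate canonical partition function
`𝒵_I(X, s) = ∫_{X^I} ∏_{i<j, i,j ∈ I} |x_i - x_j|^{s_{ij}} dμ^I` for a subset `I ⊆ [N]`. -/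
def ZI (μ : Measure ℚ_[p]) [SigmaFinite μ] (X : Set ℚ_[p]) {N : ℕ} (I : Finset (Fin N))
    (s : Fin N → Fin N → ℂ) : ℂ :=
  ∫ x : I → ℚ_[p],
    ∏ q ∈ Finset.univ.filter (fun q : (↥I) × (↥I) => (q.1 : Fin N) < (q.2 : Fin N)),
      (‖x q.1 - x q.2‖ : ℂ) ^ s q.1.1 q.2.1
    ∂(Measure.pi fun _ => μ.restrict X)

/-- The multivariate canonical partition function
`𝒵_N(ℙ¹(ℚ_p), s) = ∫_{(ℙ¹(ℚ_p))^N} ∏_{i<j} δ(ξ_i,ξ_j)^{s_{ij}} dν^N`. -/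
def ZP1s (ν : Measure (P1 p)) [SigmaFinite ν] (N : ℕ) (s : Fin N → Fin N → ℂ) : ℂ :=
  ∫ x : Fin N → P1 p, ∏ q ∈ pairs N, ((pdelta p (x q.1) (x q.2) : ℝ) : ℂ) ^ s q.1 q.2
    ∂(Measure.pi fun _ => ν)

/-- The one-component canonical partition function `Z_N(ℙ¹(ℚ_p), β)`. -/
def ZP1 (ν : Measure (P1 p)) [SigmaFinite ν] (N : ℕ) (β : ℂ) : ℂ :=
  ∫ x : Fin N → P1 p, ∏ q ∈ pairs N, ((pdelta p (x q.1) (x q.2) : ℝ) : ℂ) ^ β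
    ∂(Measure.pi fun _ => ν)

/-! ### The quadratic recurrence -/

/-- The factor `ρ_{N,k}(t,β)` appearing in the quadratic recurrence; here
`N.choose 2 = N(N-1)/2`. -/
def rho (N k : ℕ) (t : ℝ) (β : ℂ) : ℂ :=
  if t = 0 then
    (((N : ℂ) + (N.choose 2 : ℂ) * β) * (1 - 2 * (k : ℂ) / (N : ℂ)) + 1) /
      (((N : ℂ) + (N.choose 2 : ℂ) * β) - 1)
  else
    Complex.sinh (((t : ℂ) / 2) * (((N : ℂ) + (N.choose 2 : ℂ) * β) * (1 - 2 * (k : ℂ) / (N : ℂ)) + 1)) /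
      Complex.sinh (((t : ℂ) / 2) * (((N : ℂ) + (N.choose 2 : ℂ) * β) - 1))

/-- The quadratic recurrence: `F 0 = F 1 = 1` and
`F N t β = ∑_{k=1}^{N-1} (k/N) ρ_{N,k}(t,β) F_{N-k}(t,β) F_k(t,β)` for `N ≥ 2`. -/
def F : ℕ → ℝ → ℂ → ℂ
  | 0, _, _ => 1
  | 1, _, _ => 1
  | N + 2, t, β =>
    ∑ k ∈ (Finset.Icc 1 (N + 1)).attach,
      (((k : ℕ) : ℂ) / ((N : ℂ) + 2)) * rho (N + 2) k t β *
        F (N + 2 - (k : ℕ)) t β * F (k : ℕ) t β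
  decreasing_by
  all_goals
    have hk := Finset.mem_Icc.mp k.2
    omega

/-! ### Splitting chains -/

/-- A splitting chain `Λ_0 > Λ_1 > ⋯ > Λ_L` of set partitions of the subset `I ⊆ [N]`,
beginning with the trivial partition `{I}` and ending with the partition of `I` into
singletons.  (The values `Λ ℓ` for `ℓ > L` are required to be `∅`, so that a chain is
determined by the genuine data `Λ_0, …, Λ_L`.) -/
structure SplChain (N : ℕ) (I : Finset (Fin N)) where
  L : ℕ
  Λ : ℕ → Finset (Finset (Fin N))
  nonempty_mem : ∀ ℓ ≤ L, ∀ B ∈ Λ ℓ, B.Nonempty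
  subset_mem : ∀ ℓ ≤ L, ∀ B ∈ Λ ℓ, B ⊆ I
  cover : ∀ ℓ ≤ L, ∀ i ∈ I, ∃! B, B ∈ Λ ℓ ∧ i ∈ B
  first : Λ 0 = {I}
  last : Λ L = I.image fun i => {i}
  refines : ∀ ℓ < L, ∀ B ∈ Λ (ℓ + 1), ∃ C ∈ Λ ℓ, B ⊆ C
  strict : ∀ ℓ < L, Λ (ℓ + 1) ≠ Λ ℓ
  trailing : ∀ ℓ, L < ℓ → Λ ℓ = ∅

variable {N : ℕ} {I : Finset (Fin N)}

/-- The branches of a splitting chain: the non-singleton parts,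
`ℬ(𝔖) = (Λ_0 ∪ ⋯ ∪ Λ_{L-1}) \ Λ_L`. -/
def SplChain.branches (S : SplChain N I) : Finset (Finset (Fin N)) :=
  ((Finset.range S.L).biUnion S.Λ) \ S.Λ S.L

/-- The depth `ℓ_𝔖(λ) = max {ℓ : λ ∈ Λ_ℓ}` of a branch. -/
def SplChain.depth (S : SplChain N I) (lam : Finset (Fin N)) : ℕ :=
  ((Finset.range (S.L + 1)).filter fun ℓ => lam ∈ S.Λ ℓ).sup id

/-- The degree `deg_𝔖(λ) = #{λ' ∈ Λ_{ℓ_𝔖(λ)+1} : λ' ⊆ λ}` of a branch. -/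
def SplChain.degree (S : SplChain N I) (lam : Finset (Fin N)) : ℕ :=
  ((S.Λ (S.depth lam + 1)).filter fun lam' => lam' ⊆ lam).card

/-- A splitting chain is reduced if every branch appears in exactly one partition of the
chain (namely the one at its depth). -/
def SplChain.Reduced (S : SplChain N I) : Prop :=
  ∀ lam ∈ S.branches, ∀ ℓ ≤ S.L, (lam ∈ S.Λ ℓ ↔ ℓ = S.depth lam)

/-- `e_λ(s) = #λ - 1 + ∑_{i<j, i,j ∈ λ} s_{ij}`. -/
def eexp (lam : Finset (Fin N)) (s : Fin N → Fin N → ℂ) : ℂ :=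
  (lam.card : ℂ) - 1 + ∑ q ∈ (pairs N).filter fun q => q.1 ∈ lam ∧ q.2 ∈ lam, s q.1 q.2

/-- Membership in `Ω_I`: `Re e_λ(s) > 0` for every `λ ⊆ I` with `#λ > 1`. -/
def InOmega (I : Finset (Fin N)) (s : Fin N → Fin N → ℂ) : Prop :=
  ∀ lam ⊆ I, 1 < lam.card → 0 < (eexp lam s).re


/-- The multivariate canonical partition function `𝒵_N(ℤ_p, s)` over `Fin N`-indexed tuples. -/
def ZNs (μ : Measure ℚ_[p]) [SigmaFinite μ] (X : Set ℚ_[p]) (N : ℕ)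
    (s : Fin N → Fin N → ℂ) : ℂ :=
  ∫ x : Fin N → ℚ_[p], ∏ q ∈ pairs N, (‖x q.1 - x q.2‖ : ℂ) ^ s q.1 q.2
    ∂(Measure.pi fun _ => μ.restrict X)

/-- The ball `p^v ℤ_p = {x : |x| ≤ p^{-v}}` in `ℚ_p`. -/
def pvball (v : ℤ) : Set ℚ_[p] := {x | ‖x‖ ≤ (p : ℝ) ^ (-v)}

/-- `G_N(q,β) = N! q^{(1/2)(N choose 2)β} F_N(log q, β)`. -/
def GN (N : ℕ) (β : ℂ) (q : ℝ) : ℂ :=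
  (N.factorial : ℂ) * (q : ℂ) ^ ((N.choose 2 : ℂ) * β / 2) * F N (Real.log q) β

/-- `H_N(q,β)`, the efficient formula for `Z_N(ℙ¹(K),β)` as a function of `q`. -/
def HN (N : ℕ) (β : ℂ) (q : ℝ) : ℂ :=
  (N.factorial : ℂ) * ∑ k ∈ Finset.range (N + 1),
    Complex.cosh (((Real.log q : ℂ) / 2) * ((N : ℂ) + (N.choose 2 : ℂ) * β) *
          (1 - 2 * (k : ℂ) / (N : ℂ))) /
        (2 * Complex.cosh ((Real.log q : ℂ) / 2)) ^ N *
      F (N - k) (Real.log q) β * F k (Real.log q) β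

end

/-!
Grand canonically: for a pair factor `φ` and a measure `ν`, the series `∑ Z_n(ν) Xⁿ / n!` turns
sums of non-interacting measures (`φ = 1` between them) into products. The unit ball `ℤ_p` is the
union of the `p` cosets of `pℤ_p`, points of distinct cosets lie at distance `1`, and each coset
contributes as much as `pℤ_p` itself by translation invariance. Hence the series `R` of `ℤ_p` and
`P` of `pℤ_p` satisfy `R = P ^ p`, so `P R' = p R P'`, which is the claim coefficient by
coefficient. Only the pair of additive subgroups `pℤ_p ≤ ℤ_p` matters, not the field.
-/

open Finset

section BoltzmannWeight

variable {α ι κ M : Type*} [CommMonoid M] [Fintype ι] [LinearOrder ι] [Fintype κ] [LinearOrder κ]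

/-- The Boltzmann weight `∏_{i<j} φ(x_i, x_j)` of the configuration `x` for the pair factor `φ`.
The particles are labelled by an arbitrary finite linear order, so that restricting a
configuration to a subset of the labels stays within the definition. -/
def boltzmannWeight (φ : α → α → M) (x : ι → α) : M :=
  ∏ q : ι × ι with q.1 < q.2, φ (x q.1) (x q.2)

lemma boltzmannWeight_eq_prod_prod_ite (φ : α → α → M) (x : ι → α) :
    boltzmannWeight φ x = ∏ i, ∏ j, if i < j then φ (x i) (x j) else 1 := by
  rw [boltzmannWeight, prod_filter, Fintype.prod_prod_type]

lemma boltzmannWeight_comp_orderIso (φ : α → α → M) (e : κ ≃o ι) (x : ι → α) :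
    boltzmannWeight φ (x ∘ e) = boltzmannWeight φ x := by
  simp only [boltzmannWeight_eq_prod_prod_ite, Function.comp_apply, ← e.toEquiv.prod_comp,
    OrderIso.coe_toEquiv, e.lt_iff_lt]

lemma boltzmannWeight_eq_mul_of_cross_eq_one (φ : α → α → M) (s : ι → Prop) [DecidablePred s]
    (x : ι → α) (hx : ∀ i j, s i → ¬ s j → φ (x i) (x j) = 1 ∧ φ (x j) (x i) = 1) :
    boltzmannWeight φ x =
      boltzmannWeight φ (fun i : {i // s i} ↦ x i) *
        boltzmannWeight φ (fun i : {i // ¬ s i} ↦ x i) := by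
  have cross (i : {i // s i}) (j : {j // ¬ s j}) :
      (if (i : ι) < j then φ (x i) (x j) else 1) = 1 ∧
        (if (j : ι) < i then φ (x j) (x i) else 1) = 1 := by
    simp only [hx i j i.2 j.2, ite_self, and_self]
  simp only [boltzmannWeight_eq_prod_prod_ite, ← Fintype.prod_subtype_mul_prod_subtype s,
    cross, prod_const_one, one_mul, mul_one, ← Subtype.coe_lt_coe]

end BoltzmannWeight

section ProductMeasure

variable {α ι : Type*} [MeasurableSpace α] [Fintype ι]

instance sigmaFinite_ite (s : Prop) [Decidable s] (ν₁ ν₂ : Measure α) [SigmaFinite ν₁]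
    [SigmaFinite ν₂] : SigmaFinite (if s then ν₁ else ν₂) := by
  split_ifs <;> infer_instance

lemma pi_add_eq_sum_pi_ite [DecidableEq ι] (ν₁ ν₂ : Measure α) [SigmaFinite ν₁] [SigmaFinite ν₂] :
    Measure.pi (fun _ : ι ↦ ν₁ + ν₂) =
      ∑ S : Finset ι, Measure.pi (fun i ↦ if i ∈ S then ν₁ else ν₂) := by
  refine Measure.pi_eq fun t _ ↦ ?_
  simp only [Measure.finsetSum_apply, Measure.pi_pi, Measure.add_apply, prod_add, powerset_univ]
  refine sum_congr rfl fun S _ ↦ ?_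
  have happly (i : ι) : (if i ∈ S then ν₁ else ν₂) (t i) = if i ∈ S then ν₁ (t i) else ν₂ (t i) :=
    apply_ite (fun ν : Measure α ↦ ν (t i)) _ _ _
  simp only [happly, prod_ite, filter_mem_eq_inter, univ_inter, filter_notMem_eq_sdiff]

end ProductMeasure

section PartitionFunction

variable {α β 𝕜 : Type*} [MeasurableSpace α] [MeasurableSpace β] [RCLike 𝕜]
  {ι κ : Type*} [Fintype ι] [LinearOrder ι] [Fintype κ] [LinearOrder κ]

/-- The canonical partition function `∫ ∏_{i<j} φ(x_i, x_j) dν^ι` of particles labelled by `ι`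
and distributed according to `ν`, with pair factor `φ`. As a Bochner integral it is `0` when it
does not converge absolutely. -/
noncomputable def partitionFunction (φ : α → α → 𝕜) (ν : Measure α) (ι : Type*) [Fintype ι]
    [LinearOrder ι] : 𝕜 :=
  ∫ x : ι → α, boltzmannWeight φ x ∂Measure.pi fun _ ↦ ν

lemma partitionFunction_eq_of_orderIso (φ : α → α → 𝕜) (ν : Measure α) [SigmaFinite ν]
    (e : ι ≃o κ) : partitionFunction φ ν ι = partitionFunction φ ν κ := by
  rw [partitionFunction, partitionFunction,
    ← (measurePreserving_piCongrLeft (fun _ : κ ↦ ν) e.toEquiv).integral_comp']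
  refine integral_congr_ae (.of_forall fun x ↦ ?_)
  have reindex : MeasurableEquiv.piCongrLeft (fun _ : κ ↦ α) e.toEquiv x ∘ e = x :=
    funext (Equiv.piCongrLeft_apply_apply (fun _ : κ ↦ α) e.toEquiv x)
  exact (congrArg _ reindex).symm.trans (boltzmannWeight_comp_orderIso φ e _)

lemma partitionFunction_eq_fin (φ : α → α → 𝕜) (ν : Measure α) [SigmaFinite ν] {n : ℕ}
    (hn : Fintype.card ι = n) : partitionFunction φ ν ι = partitionFunction φ ν (Fin n) :=
  partitionFunction_eq_of_orderIso φ ν (Fintype.orderIsoFinOfCardEq ι hn).symm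

lemma partitionFunction_eq_of_measurePreserving {φ : α → α → 𝕜} {ψ : β → β → 𝕜} {ν : Measure α}
    {ξ : Measure β} [SigmaFinite ξ] {e : α ≃ᵐ β} (he : MeasurePreserving e ν ξ)
    (hφ : ∀ x y, ψ (e x) (e y) = φ x y) :
    partitionFunction φ ν ι = partitionFunction ψ ξ ι := by
  have hpi : MeasurePreserving (MeasurableEquiv.piCongrRight fun _ : ι ↦ e)
      (Measure.pi fun _ ↦ ν) (Measure.pi fun _ ↦ ξ) :=
    measurePreserving_pi _ _ fun _ ↦ he
  rw [partitionFunction, partitionFunction, ← hpi.integral_comp']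
  exact integral_congr_ae (.of_forall fun x ↦ prod_congr rfl fun q _ ↦ (hφ _ _).symm)

lemma integrable_boltzmannWeight {φ : α → α → 𝕜} (hφ : Measurable (Function.uncurry φ))
    {ν : Measure α} [IsFiniteMeasure ν] {X : Set α} (hX : ∀ᵐ x ∂ν, x ∈ X)
    (hφX : ∀ x ∈ X, ∀ y ∈ X, ‖φ x y‖ ≤ 1) :
    Integrable (boltzmannWeight φ : (ι → α) → 𝕜) (Measure.pi fun _ ↦ ν) := by
  have hmeas : Measurable (boltzmannWeight φ : (ι → α) → 𝕜) :=
    measurable_fun_prod _ fun q _ ↦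
      hφ.comp (g := Function.uncurry φ) (f := fun x : ι → α ↦ (x q.1, x q.2)) (by fun_prop)
  have hmem : ∀ᵐ x ∂Measure.pi (fun _ : ι ↦ ν), ∀ i, x i ∈ X :=
    ae_all_iff.2 fun _ ↦ Measure.tendsto_eval_ae_ae.eventually hX
  refine Integrable.of_bound hmeas.aestronglyMeasurable 1 ?_
  filter_upwards [hmem] with x hx
  rw [boltzmannWeight, norm_prod]
  exact prod_le_one (fun _ _ ↦ norm_nonneg _) fun q _ ↦ hφX _ (hx _) _ (hx _)

section NonInteracting

variable {φ : α → α → 𝕜} {ν₁ ν₂ : Measure α} [SigmaFinite ν₁] [SigmaFinite ν₂]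

lemma integral_boltzmannWeight_pi_ite {X Y : Set α} (hX : ∀ᵐ x ∂ν₁, x ∈ X)
    (hY : ∀ᵐ y ∂ν₂, y ∈ Y) (hφ : ∀ x ∈ X, ∀ y ∈ Y, φ x y = 1 ∧ φ y x = 1) (s : ι → Prop)
    [DecidablePred s] :
    ∫ x, boltzmannWeight φ x ∂Measure.pi (fun i ↦ if s i then ν₁ else ν₂) =
      partitionFunction φ ν₁ (Fin #{i | s i}) * partitionFunction φ ν₂ (Fin #{i | ¬ s i}) := by
  set ν : ι → Measure α := fun i ↦ if s i then ν₁ else ν₂ with hν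
  have hν₁ : (fun i : {i // s i} ↦ ν i) = fun _ ↦ ν₁ := funext fun i ↦ if_pos i.2
  have hν₂ : (fun i : {i // ¬ s i} ↦ ν i) = fun _ ↦ ν₂ := funext fun i ↦ if_neg i.2
  have hmem : ∀ᵐ x ∂Measure.pi ν, ∀ i, (s i → x i ∈ X) ∧ (¬ s i → x i ∈ Y) := by
    refine ae_all_iff.2 fun i ↦ (Measure.tendsto_eval_ae_ae (μ := ν) (i := i)).eventually
      (p := fun y ↦ (s i → y ∈ X) ∧ (¬ s i → y ∈ Y)) ?_
    by_cases hi : s i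
    · simpa only [hν, hi, if_true, true_implies, not_true, false_implies, and_true] using hX
    · simpa only [hν, hi, if_false, true_implies, not_false_iff, false_implies, true_and] using hY
  calc ∫ x, boltzmannWeight φ x ∂Measure.pi ν
      = ∫ x, boltzmannWeight φ (fun i : {i // s i} ↦ x i) *
          boltzmannWeight φ (fun i : {i // ¬ s i} ↦ x i) ∂Measure.pi ν := by
        refine integral_congr_ae ?_
        filter_upwards [hmem] with x hx
        exact boltzmannWeight_eq_mul_of_cross_eq_one φ s x fun i j hi hj ↦
          hφ _ ((hx i).1 hi) _ ((hx j).2 hj)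
    _ = ∫ z, boltzmannWeight φ z.1 * boltzmannWeight φ z.2
          ∂(Measure.pi fun i : {i // s i} ↦ ν i).prod (Measure.pi fun i : {i // ¬ s i} ↦ ν i) :=
        (measurePreserving_piEquivPiSubtypeProd ν s).integral_comp'
          fun z ↦ boltzmannWeight φ z.1 * boltzmannWeight φ z.2
    _ = partitionFunction φ ν₁ {i // s i} * partitionFunction φ ν₂ {i // ¬ s i} := by
        rw [integral_prod_mul, hν₁, hν₂, partitionFunction, partitionFunction]
    _ = partitionFunction φ ν₁ (Fin #{i | s i}) * partitionFunction φ ν₂ (Fin #{i | ¬ s i}) := by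
        rw [partitionFunction_eq_fin φ ν₁ (Fintype.card_subtype s),
          partitionFunction_eq_fin φ ν₂ (Fintype.card_subtype (¬ s ·))]

lemma partitionFunction_add {X Y : Set α} (hX : ∀ᵐ x ∂ν₁, x ∈ X) (hY : ∀ᵐ y ∂ν₂, y ∈ Y)
    (hφ : ∀ x ∈ X, ∀ y ∈ Y, φ x y = 1 ∧ φ y x = 1) {n : ℕ}
    (hint : Integrable (boltzmannWeight φ : (Fin n → α) → 𝕜) (Measure.pi fun _ ↦ ν₁ + ν₂)) :
    partitionFunction φ (ν₁ + ν₂) (Fin n) = ∑ k ∈ range (n + 1),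
      n.choose k * (partitionFunction φ ν₁ (Fin k) * partitionFunction φ ν₂ (Fin (n - k))) := by
  rw [pi_add_eq_sum_pi_ite, integrable_finsetSum_measure] at hint
  rw [partitionFunction, pi_add_eq_sum_pi_ite, integral_finsetSum_measure hint]
  have term (S : Finset (Fin n)) :
      ∫ x, boltzmannWeight φ x ∂Measure.pi (fun i ↦ if i ∈ S then ν₁ else ν₂) =
        partitionFunction φ ν₁ (Fin #S) * partitionFunction φ ν₂ (Fin (n - #S)) := by
    rw [integral_boltzmannWeight_pi_ite hX hY hφ, filter_univ_mem, filter_notMem_eq_sdiff,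
      card_univ_sdiff, Fintype.card_fin]
  rw [sum_congr rfl fun S _ ↦ term S, ← powerset_univ, sum_powerset_apply_card
    fun k ↦ partitionFunction φ ν₁ (Fin k) * partitionFunction φ ν₂ (Fin (n - k))]
  simp only [card_univ, Fintype.card_fin, nsmul_eq_mul]

lemma integrable_boltzmannWeight_of_add_left
    (hint : Integrable (boltzmannWeight φ : (ι → α) → 𝕜) (Measure.pi fun _ ↦ ν₁ + ν₂)) :
    Integrable (boltzmannWeight φ : (ι → α) → 𝕜) (Measure.pi fun _ ↦ ν₁) := by
  rw [pi_add_eq_sum_pi_ite, integrable_finsetSum_measure] at hint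
  simpa only [mem_univ, if_true] using hint univ (mem_univ _)

end NonInteracting

end PartitionFunction

section GrandPartitionFunction

variable {α 𝕜 : Type*} [MeasurableSpace α] [RCLike 𝕜] {φ : α → α → 𝕜}

/-- The grand canonical partition function `∑ Z_n(ν) Xⁿ / n!`, as a formal power series in the
fugacity. -/
noncomputable def grandPartitionFunction (φ : α → α → 𝕜) (ν : Measure α) : PowerSeries 𝕜 :=
  .mk fun n ↦ partitionFunction φ ν (Fin n) / n.factorial

lemma grandPartitionFunction_zero : grandPartitionFunction φ (0 : Measure α) = 1 := by
  ext n
  cases n with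
  | zero => simp [grandPartitionFunction, partitionFunction, boltzmannWeight, measureReal_def]
  | succ n =>
    have hpi : Measure.pi (fun _ : Fin (n + 1) ↦ (0 : Measure α)) = 0 :=
      Measure.measure_univ_eq_zero.1 (by simp [Measure.pi_univ])
    simp [grandPartitionFunction, partitionFunction, PowerSeries.coeff_one, hpi]

lemma grandPartitionFunction_add {ν₁ ν₂ : Measure α} [SigmaFinite ν₁] [SigmaFinite ν₂]
    {X Y : Set α} (hX : ∀ᵐ x ∂ν₁, x ∈ X) (hY : ∀ᵐ y ∂ν₂, y ∈ Y)
    (hφ : ∀ x ∈ X, ∀ y ∈ Y, φ x y = 1 ∧ φ y x = 1)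
    (hint : ∀ n, Integrable (boltzmannWeight φ : (Fin n → α) → 𝕜)
      (Measure.pi fun _ ↦ ν₁ + ν₂)) :
    grandPartitionFunction φ (ν₁ + ν₂) =
      grandPartitionFunction φ ν₁ * grandPartitionFunction φ ν₂ := by
  ext n
  rw [PowerSeries.coeff_mul, Nat.sum_antidiagonal_eq_sum_range_succ_mk]
  simp only [grandPartitionFunction, PowerSeries.coeff_mk]
  rw [partitionFunction_add hX hY hφ (hint n), sum_div]
  refine sum_congr rfl fun k hk ↦ ?_
  rw [Nat.cast_choose 𝕜 (mem_range_succ_iff.1 hk)]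
  have := Nat.cast_ne_zero (R := 𝕜).2 n.factorial_ne_zero
  field_simp

lemma grandPartitionFunction_restrict_biUnion {τ : Type*} (μ : Measure α) [SigmaFinite μ]
    (T : Finset τ) {X : τ → Set α} (hX : ∀ t, MeasurableSet (X t))
    (hdisj : Pairwise (Function.onFun Disjoint X))
    (hφ : ∀ s t, s ≠ t → ∀ x ∈ X s, ∀ y ∈ X t, φ x y = 1)
    (hint : ∀ n, Integrable (boltzmannWeight φ : (Fin n → α) → 𝕜)
      (Measure.pi fun _ ↦ μ.restrict (⋃ t ∈ T, X t))) :
    grandPartitionFunction φ (μ.restrict (⋃ t ∈ T, X t)) =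
      ∏ t ∈ T, grandPartitionFunction φ (μ.restrict (X t)) := by
  classical
  induction T using Finset.induction_on with
  | empty => simp [grandPartitionFunction_zero]
  | insert t T ht ih =>
    have hmeas : MeasurableSet (⋃ s ∈ T, X s) := T.measurableSet_biUnion fun s _ ↦ hX s
    have hsplit : μ.restrict (⋃ s ∈ insert t T, X s) =
        μ.restrict (⋃ s ∈ T, X s) + μ.restrict (X t) := by
      rw [set_biUnion_insert, Set.union_comm, Measure.restrict_union _ (hX t)]
      exact Set.disjoint_iUnion₂_left.2 fun s hs ↦ hdisj (ne_of_mem_of_not_mem hs ht)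
    rw [hsplit] at hint ⊢
    rw [grandPartitionFunction_add (ae_restrict_mem hmeas) (ae_restrict_mem (hX t)) ?_ hint,
      ih fun n ↦ integrable_boltzmannWeight_of_add_left (hint n), prod_insert ht, mul_comm]
    intro x hx y hy
    obtain ⟨s, hs, hxs⟩ := Set.mem_iUnion₂.1 hx
    have hst : s ≠ t := ne_of_mem_of_not_mem hs ht
    exact ⟨hφ s t hst x hxs y hy, hφ t s hst.symm y hy x hxs⟩

end GrandPartitionFunction

section PowerSeries

lemma coeff_mul_derivative_mk_div_factorial {F : Type*} [Field F] [CharZero F] (a b : ℕ → F)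
    (n : ℕ) :
    PowerSeries.coeff n ((PowerSeries.mk fun k ↦ a k / k.factorial) *
        PowerSeries.derivative F (PowerSeries.mk fun k ↦ b k / k.factorial)) =
      ∑ k ∈ Icc 1 (n + 1),
        a (n + 1 - k) / (n + 1 - k).factorial * (b k / (k - 1).factorial) := by
  rw [mul_comm, PowerSeries.coeff_mul, Nat.sum_antidiagonal_eq_sum_range_succ_mk,
    ← Ico_add_one_right_eq_Icc, sum_Ico_eq_sum_range]
  refine sum_congr rfl fun k _ ↦ ?_
  have hk : (k.factorial : F) ≠ 0 := Nat.cast_ne_zero.2 k.factorial_ne_zero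
  have hk' : (k : F) + 1 ≠ 0 := Nat.cast_add_one_ne_zero k
  rw [PowerSeries.coeff_derivative, PowerSeries.coeff_mk, PowerSeries.coeff_mk,
    Nat.add_comm 1 k, Nat.add_sub_add_right, Nat.add_sub_cancel, Nat.factorial_succ]
  push_cast
  field_simp

lemma mul_derivative_pow {R : Type*} [CommRing R] (f : PowerSeries R) (n : ℕ) :
    f * PowerSeries.derivative R (f ^ n) = n * (f ^ n * PowerSeries.derivative R f) := by
  cases n with
  | zero => simp
  | succ n => rw [PowerSeries.derivative_pow, Nat.add_sub_cancel]; ring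

end PowerSeries

section Subgroup

variable {G 𝕜 : Type*} [AddCommGroup G]

lemma quotientMk_eq_iff_sub_out_mem {A B : AddSubgroup G} (x : B) (t : B ⧸ A.addSubgroupOf B) :
    (x : B ⧸ A.addSubgroupOf B) = t ↔ (x : G) - (t.out : G) ∈ A := by
  conv_lhs => rw [← QuotientAddGroup.out_eq' t, eq_comm, QuotientAddGroup.eq]
  rw [AddSubgroup.mem_addSubgroupOf, AddSubgroup.coe_add, AddSubgroup.coe_neg, neg_add_eq_sub]

variable [MeasurableSpace G] [MeasurableAdd G] [RCLike 𝕜]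
  (μ : Measure G) [SigmaFinite μ] [μ.IsAddRightInvariant]

lemma grandPartitionFunction_restrict_preimage_sub (g : G → 𝕜) {s : Set G} (hs : MeasurableSet s)
    (a : G) :
    grandPartitionFunction (fun x y ↦ g (x - y)) (μ.restrict ((· - a) ⁻¹' s)) =
      grandPartitionFunction (fun x y ↦ g (x - y)) (μ.restrict s) := by
  have hpres : MeasurePreserving (MeasurableEquiv.subRight a) (μ.restrict ((· - a) ⁻¹' s))
      (μ.restrict s) :=
    (measurePreserving_sub_right μ a).restrict_preimage hs
  ext n
  simp only [grandPartitionFunction, PowerSeries.coeff_mk]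
  rw [partitionFunction_eq_of_measurePreserving hpres fun x y ↦ ?_]
  exact congrArg g (sub_sub_sub_cancel_right x y a)

theorem grandPartitionFunction_restrict_eq_pow_relIndex {A B : AddSubgroup G} (hAB : A ≤ B)
    [A.IsFiniteRelIndex B] (hA : MeasurableSet (A : Set G)) {g : G → 𝕜}
    (hg : ∀ x ∈ B, x ∉ A → g x = 1)
    (hint : ∀ n, Integrable (boltzmannWeight fun x y ↦ g (x - y) : (Fin n → G) → 𝕜)
      (Measure.pi fun _ ↦ μ.restrict B)) :
    grandPartitionFunction (fun x y ↦ g (x - y)) (μ.restrict B) =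
      grandPartitionFunction (fun x y ↦ g (x - y)) (μ.restrict A) ^ A.relIndex B := by
  let coset (t : B ⧸ A.addSubgroupOf B) : Set G := (· - (t.out : G)) ⁻¹' A
  have := Fintype.ofFinite (B ⧸ A.addSubgroupOf B)
  have hsub (t) : coset t ⊆ B := fun x hx ↦ by
    simpa only [SetLike.mem_coe, sub_add_cancel] using B.add_mem (hAB hx) t.out.2
  have hcover : (B : Set G) = ⋃ t ∈ univ, coset t := by
    refine Set.Subset.antisymm (fun x hx ↦ ?_) (Set.iUnion₂_subset fun t _ ↦ hsub t)
    exact Set.mem_iUnion₂.2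
      ⟨(⟨x, hx⟩ : B), mem_univ _, (quotientMk_eq_iff_sub_out_mem ⟨x, hx⟩ _).1 rfl⟩
  have hsep (s t) (hst : s ≠ t) (x) (hx : x ∈ coset s) (y) (hy : y ∈ coset t) : x - y ∉ A := by
    intro hxy
    have hys : y - s.out ∈ A := by simpa only [sub_sub_sub_cancel_left] using A.sub_mem hx hxy
    exact hst (((quotientMk_eq_iff_sub_out_mem ⟨y, hsub t hy⟩ s).2 hys).symm.trans
      ((quotientMk_eq_iff_sub_out_mem _ t).2 hy))
  have hdisj : Pairwise (Function.onFun Disjoint coset) := fun s t hst ↦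
    Set.disjoint_left.2 fun x hs ht ↦ hsep s t hst x hs x ht (by rw [sub_self]; exact A.zero_mem)
  have hmeas (t) : MeasurableSet (coset t) := (MeasurableEquiv.subRight _).measurable hA
  rw [hcover] at hint ⊢
  rw [grandPartitionFunction_restrict_biUnion μ univ hmeas hdisj
    (fun s t hst x hx y hy ↦ hg _ (B.sub_mem (hsub s hx) (hsub t hy)) (hsep s t hst x hx y hy))
    hint]
  simp only [coset, grandPartitionFunction_restrict_preimage_sub μ g hA, prod_const, card_univ,
    AddSubgroup.relIndex, AddSubgroup.index, Nat.card_eq_fintype_card]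

theorem statement_16_general {A B : AddSubgroup G} (hAB : A ≤ B) [A.IsFiniteRelIndex B]
    (hA : MeasurableSet (A : Set G)) {g : G → 𝕜} (hg : ∀ x ∈ B, x ∉ A → g x = 1)
    (hint : ∀ n, Integrable (boltzmannWeight fun x y ↦ g (x - y) : (Fin n → G) → 𝕜)
      (Measure.pi fun _ ↦ μ.restrict B)) (N : ℕ) :
    ∑ k ∈ Icc 1 N,
        partitionFunction (fun x y ↦ g (x - y)) (μ.restrict A) (Fin (N - k)) / (N - k).factorial *
          (partitionFunction (fun x y ↦ g (x - y)) (μ.restrict B) (Fin k) / (k - 1).factorial) =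
      A.relIndex B * ∑ k ∈ Icc 1 N,
        partitionFunction (fun x y ↦ g (x - y)) (μ.restrict B) (Fin (N - k)) / (N - k).factorial *
          (partitionFunction (fun x y ↦ g (x - y)) (μ.restrict A) (Fin k) / (k - 1).factorial) := by
  obtain _ | n := N
  · simp
  have hpow := grandPartitionFunction_restrict_eq_pow_relIndex μ hAB hA hg hint
  have hderiv := mul_derivative_pow
    (grandPartitionFunction (fun x y ↦ g (x - y)) (μ.restrict A)) (A.relIndex B)
  rw [← hpow] at hderiv
  have hcoeff := congrArg (PowerSeries.coeff n) hderiv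
  rw [← nsmul_eq_mul, map_nsmul, nsmul_eq_mul] at hcoeff
  simpa only [grandPartitionFunction, coeff_mul_derivative_mk_div_factorial] using hcoeff

end Subgroup

section Padic

variable (p : ℕ) [Fact p.Prime]

/-- `ℤ_p` as an additive subgroup of `ℚ_p`, with carrier `Zball p`. -/
noncomputable def ZballAddSubgroup : AddSubgroup ℚ_[p] := (PadicInt.subring p).toAddSubgroup

/-- `pℤ_p` as an additive subgroup of `ℚ_p`, with carrier `Pball p`. -/
noncomputable def PballAddSubgroup : AddSubgroup ℚ_[p] :=
  (IsUltrametricDist.ball_openAddSubgroup ℚ_[p] one_pos).toAddSubgroup.copy (Pball p)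
    (by ext; simp [Pball, IsUltrametricDist.ball_openAddSubgroup])

lemma coe_ZballAddSubgroup : (ZballAddSubgroup p : Set ℚ_[p]) = Zball p := rfl

lemma coe_PballAddSubgroup : (PballAddSubgroup p : Set ℚ_[p]) = Pball p := rfl

lemma PballAddSubgroup_le_ZballAddSubgroup : PballAddSubgroup p ≤ ZballAddSubgroup p :=
  fun x (hx : ‖x‖ < 1) ↦ hx.le

lemma PballAddSubgroup_relIndex_ZballAddSubgroup :
    (PballAddSubgroup p).relIndex (ZballAddSubgroup p) = p := by
  let reduction : ZballAddSubgroup p →+ ZMod p := (PadicInt.toZMod (p := p)).toAddMonoidHom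
  have hker : (PballAddSubgroup p).addSubgroupOf (ZballAddSubgroup p) = reduction.ker := by
    ext x
    have hmem : x ∈ RingHom.ker (PadicInt.toZMod (p := p)) ↔ ‖(x : ℚ_[p])‖ < 1 := by
      rw [PadicInt.ker_toZMod]; exact PadicInt.mem_nonunits
    exact hmem.symm
  have hrange : reduction.range = ⊤ :=
    AddMonoidHom.range_eq_top.2 (ZMod.ringHom_surjective (PadicInt.toZMod (p := p)))
  rw [AddSubgroup.relIndex, hker, AddSubgroup.index_ker, hrange, AddSubgroup.card_top,
    Nat.card_zmod]

instance : (PballAddSubgroup p).IsFiniteRelIndex (ZballAddSubgroup p) :=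
  ⟨by rw [PballAddSubgroup_relIndex_ZballAddSubgroup]; exact (Fact.out : p.Prime).ne_zero⟩

variable {p}

lemma norm_cpow_eq_one_of_mem_of_notMem (β : ℂ) {x : ℚ_[p]} (hx : x ∈ ZballAddSubgroup p)
    (hx' : x ∉ PballAddSubgroup p) : (‖x‖ : ℂ) ^ β = 1 := by
  have hnorm : ‖x‖ = 1 := le_antisymm hx (not_lt.1 hx')
  rw [hnorm, Complex.ofReal_one, Complex.one_cpow]

lemma norm_cpow_norm_le_one {β : ℂ} (hβ : 0 ≤ β.re) {x : ℚ_[p]} (hx : ‖x‖ ≤ 1) :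
    ‖(‖x‖ : ℂ) ^ β‖ ≤ 1 := by
  have hrpow : ‖(‖x‖ : ℂ) ^ β‖ ≤ ‖x‖ ^ β.re := by
    simpa [Complex.arg_ofReal_of_nonneg] using Complex.norm_cpow_le (‖x‖ : ℂ) β
  exact hrpow.trans (Real.rpow_le_one (norm_nonneg x) hx hβ)

lemma integrable_boltzmannWeight_norm_sub_cpow (μ : Measure ℚ_[p])
    [IsFiniteMeasureOnCompacts μ] {β : ℂ} (hβ : 0 ≤ β.re) {ι : Type*} [Fintype ι]
    [LinearOrder ι] :
    Integrable (boltzmannWeight fun x y ↦ (‖x - y‖ : ℂ) ^ β : (ι → ℚ_[p]) → ℂ)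
      (Measure.pi fun _ ↦ μ.restrict (ZballAddSubgroup p)) := by
  have hball : (ZballAddSubgroup p : Set ℚ_[p]) = Metric.closedBall 0 1 :=
    Set.ext fun _ ↦ mem_closedBall_zero_iff.symm
  have hcompact : IsCompact (ZballAddSubgroup p : Set ℚ_[p]) := by
    rw [hball]; exact isCompact_closedBall 0 1
  have := isFiniteMeasure_restrict.2 (hcompact.measure_ne_top (μ := μ))
  have hkernel : Measurable (Function.uncurry fun x y : ℚ_[p] ↦ (‖x - y‖ : ℂ) ^ β) :=
    (Complex.measurable_ofReal.comp (by fun_prop)).pow_const β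
  exact integrable_boltzmannWeight hkernel (ae_restrict_mem hcompact.measurableSet)
    fun x hx y hy ↦ norm_cpow_norm_le_one hβ ((ZballAddSubgroup p).sub_mem hx hy)

lemma measurableSet_PballAddSubgroup : MeasurableSet (PballAddSubgroup p : Set ℚ_[p]) :=
  measurableSet_lt measurable_norm measurable_const

lemma ZN_eq_partitionFunction (μ : Measure ℚ_[p]) [SigmaFinite μ] (X : Set ℚ_[p]) (N : ℕ)
    (β : ℂ) :
    ZN p μ X N β = partitionFunction (fun x y ↦ (‖x - y‖ : ℂ) ^ β) (μ.restrict X) (Fin N) :=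
  rfl

end Padic

theorem statement_16 (p : ℕ) [Fact p.Prime]
    (μ : Measure ℚ_[p]) [SigmaFinite μ] [μ.IsAddHaarMeasure] (hμ : μ (Zball p) = 1)
    (β : ℝ) (hβ : 0 < β) (N : ℕ) (hN : 1 ≤ N) :
    ∑ k ∈ Finset.Icc 1 N,
        ZN p μ (Pball p) (N - k) (β : ℂ) / ((N - k).factorial : ℂ) *
          (ZN p μ (Zball p) k (β : ℂ) / ((k - 1).factorial : ℂ)) =
      (p : ℂ) * ∑ k ∈ Finset.Icc 1 N,
        ZN p μ (Zball p) (N - k) (β : ℂ) / ((N - k).factorial : ℂ) *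
          (ZN p μ (Pball p) k (β : ℂ) / ((k - 1).factorial : ℂ)) := by
  simpa only [ZN_eq_partitionFunction, coe_ZballAddSubgroup, coe_PballAddSubgroup,
    PballAddSubgroup_relIndex_ZballAddSubgroup] using statement_16_general μ
      (PballAddSubgroup_le_ZballAddSubgroup p) measurableSet_PballAddSubgroup
      (fun _ ↦ norm_cpow_eq_one_of_mem_of_notMem β)
      (fun _ ↦ integrable_boltzmannWeight_norm_sub_cpow μ hβ.le) N

end LogCoulomb
end

section
/- For every prime p and every Borel set M ⊆ ℚ_p, ν({[x:1] : x ∈ M}) = (p/(p+1)) · ∫_M (max(1, |x|_p²))^{−1} dμ(x); that is, on the image of the embedding ι: ℚ_p → ℙ¹(ℚ_p), ι(x) = [x:1], the measure ν pulls back to the measure with density (p/(p+1))·(max(1,|x|_p²))^{−1} with respect to the Haar measure μ. -/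
open MeasureTheory
open scoped LinearAlgebra.Projectivization

namespace LogCoulomb

/-!
The additive Haar measure of `ℤ_p` is determined up to scale by translation invariance, and the
matrices `!![1, a; 0, 1]` with `a ∈ ℤ_p` act on `ι(ℤ_p)` as translations, so `ν` pulls back to a
multiple of `μ` on `ℤ_p`. The swap `!![0, 1; 1, 0]` acts on the chart as `x ↦ 1 / x` and maps
`ι(pℤ_p)` onto the complement of `ι(ℤ_p)`, so the multiple `c = ν(ι(ℤ_p))` satisfies
`c + c / p = 1`. Outside `ℤ_p` the swap reduces the claim to the Jacobian of the inversion of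
`ℚ_p^×`: the measure `d×x = dx / |x|` is a Haar measure on a commutative group, hence invariant
under inversion, so `x ↦ 1 / x` transforms `dx = |x| d×x` into `|x|⁻¹ d×x = |x|⁻² dx`.
-/

section UnitsHaar

open scoped Pointwise

variable {K : Type*} [NormedField K] [MeasurableSpace K] [BorelSpace K]

instance : BorelSpace Kˣ := by
  borelize K
  exact ⟨(borel_comap (f := (Units.val : Kˣ → K))).symm.trans <|
    congrArg _ Units.isOpenEmbedding_val.eq_induced.symm⟩

lemma measurableEmbedding_unitsVal : MeasurableEmbedding (Units.val : Kˣ → K) :=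
  Units.isOpenEmbedding_val.measurableEmbedding

lemma measurable_enorm_inv_unitsVal : Measurable fun u : Kˣ => ‖(u : K)‖ₑ⁻¹ :=
  measurableEmbedding_unitsVal.measurable.enorm.inv

/-- The measure `d×x = dx / |x|` on `Kˣ`, where `μ = dx`. It is a Haar measure on `Kˣ` when `μ`
is an additive Haar measure scaled by multiplication by `x` with factor `|x|`. -/
noncomputable def unitsHaar (μ : Measure K) : Measure Kˣ :=
  (μ.comap Units.val).withDensity fun u => ‖(u : K)‖ₑ⁻¹

lemma comap_unitsVal_eq_withDensity_unitsHaar (μ : Measure K) :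
    μ.comap Units.val = (unitsHaar μ).withDensity fun u => ‖(u : K)‖ₑ := by
  simpa [unitsHaar] using (withDensity_inv_same (μ := μ.comap (Units.val : Kˣ → K))
    measurable_enorm_inv_unitsVal (by simp) (by simp)).symm

variable [ProperSpace K] (μ : Measure K) [μ.IsAddHaarMeasure]

lemma map_mul_left_comap_unitsVal (hK : ∀ u : Kˣ, distribHaarChar K u = ‖(u : K)‖₊) (u : Kˣ) :
    (μ.comap Units.val).map (u * ·) = ‖(u : K)‖ₑ⁻¹ • μ.comap Units.val := by
  ext S hS
  have himage : Units.val '' ((u * ·) ⁻¹' S) = u⁻¹ • (Units.val '' S) := by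
    change Units.val '' ((u • ·) ⁻¹' S) = u⁻¹ • (Units.val '' S)
    rw [Set.preimage_smul, ← Set.image_smul, ← Set.image_smul, Set.image_image, Set.image_image]
    rfl
  calc (μ.comap Units.val).map (u * ·) S = μ (u⁻¹ • (Units.val '' S)) := by
        rw [Measure.map_apply (measurable_const_mul u) hS,
          measurableEmbedding_unitsVal.comap_apply, himage]
    _ = ‖(↑u⁻¹ : K)‖ₑ * μ (Units.val '' S) := by
        rw [← distribHaarChar_mul, hK, enorm_eq_nnnorm]
    _ = (‖(u : K)‖ₑ⁻¹ • μ.comap Units.val) S := by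
        simp [measurableEmbedding_unitsVal.comap_apply]

lemma map_mul_left_unitsHaar (hK : ∀ u : Kˣ, distribHaarChar K u = ‖(u : K)‖₊) (u : Kˣ) :
    (unitsHaar μ).map (u * ·) = unitsHaar μ := by
  have hu : ‖(u : K)‖ₑ ≠ 0 := enorm_ne_zero.2 u.ne_zero
  ext S hS
  have hSu : MeasurableSet ((u * ·) ⁻¹' S) := hS.preimage (measurable_const_mul u)
  calc (unitsHaar μ).map (u * ·) S
      = ∫⁻ v in (u * ·) ⁻¹' S, ‖(v : K)‖ₑ⁻¹ ∂μ.comap Units.val := by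
        rw [Measure.map_apply (measurable_const_mul u) hS, unitsHaar, withDensity_apply _ hSu]
    _ = ∫⁻ v in (u * ·) ⁻¹' S, ‖(u : K)‖ₑ * ‖(↑(u * v) : K)‖ₑ⁻¹ ∂μ.comap Units.val := by
        simp_rw [Units.val_mul, enorm_mul, ENNReal.mul_inv (.inl hu) (.inl enorm_ne_top),
          ENNReal.mul_inv_cancel_left hu enorm_ne_top]
    _ = ∫⁻ v in S, ‖(u : K)‖ₑ * ‖(v : K)‖ₑ⁻¹ ∂(μ.comap Units.val).map (u * ·) :=
        (setLIntegral_map hS (measurable_enorm_inv_unitsVal.const_mul _)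
          (measurable_const_mul u)).symm
    _ = ∫⁻ v in S, ‖(v : K)‖ₑ⁻¹ ∂μ.comap Units.val := by
        rw [map_mul_left_comap_unitsVal μ hK, Measure.restrict_smul, lintegral_smul_measure,
          lintegral_const_mul _ measurable_enorm_inv_unitsVal, smul_eq_mul,
          ENNReal.inv_mul_cancel_left hu enorm_ne_top]
    _ = unitsHaar μ S := by rw [unitsHaar, withDensity_apply _ hS]

lemma isHaarMeasure_unitsHaar (hK : ∀ u : Kˣ, distribHaarChar K u = ‖(u : K)‖₊) :
    (unitsHaar μ).IsHaarMeasure where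
  map_mul_left_eq_self := map_mul_left_unitsHaar μ hK
  toIsFiniteMeasureOnCompacts := by
    have : IsFiniteMeasureOnCompacts (μ.comap (Units.val : Kˣ → K)) :=
      .comap' μ Units.continuous_val measurableEmbedding_unitsVal
    have : IsLocallyFiniteMeasure (unitsHaar μ) := by
      simpa [unitsHaar, ← enorm_eq_nnnorm] using
        (IsLocallyFiniteMeasure.withDensity_coe (μ := μ.comap (Units.val : Kˣ → K))
          (Units.continuous_val.comp continuous_inv).nnnorm)
    infer_instance
  toIsOpenPosMeasure := by
    have : (μ.comap (Units.val : Kˣ → K)).IsOpenPosMeasure :=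
      .comap μ Units.isOpenEmbedding_val
    exact (withDensity_absolutelyContinuous' measurable_enorm_inv_unitsVal.aemeasurable
      (by simp)).isOpenPosMeasure

lemma comap_unitsVal_inv (hK : ∀ u : Kˣ, distribHaarChar K u = ‖(u : K)‖₊) {S : Set Kˣ}
    (hS : MeasurableSet S) :
    μ.comap Units.val S⁻¹ = ∫⁻ u in S, (‖(u : K)‖ₑ ^ 2)⁻¹ ∂μ.comap Units.val := by
  have : (unitsHaar μ).IsHaarMeasure := isHaarMeasure_unitsHaar μ hK
  have : SecondCountableTopology Kˣ :=
    Units.isOpenEmbedding_val.isEmbedding.secondCountableTopology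
  calc μ.comap Units.val S⁻¹ = ∫⁻ u in S⁻¹, ‖(u : K)‖ₑ ∂unitsHaar μ := by
        rw [comap_unitsVal_eq_withDensity_unitsHaar, withDensity_apply _ hS.inv]
    _ = ∫⁻ u in S, ‖(u : K)‖ₑ⁻¹ ∂unitsHaar μ := by
        nth_rw 2 [← (unitsHaar μ).map_inv_eq_self]
        rw [setLIntegral_map hS measurable_enorm_inv_unitsVal measurable_inv]
        simp
    _ = ∫⁻ u in S, (‖(u : K)‖ₑ ^ 2)⁻¹ ∂μ.comap Units.val := by
        rw [unitsHaar, setLIntegral_withDensity_eq_setLIntegral_mul _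
          measurable_enorm_inv_unitsVal measurable_enorm_inv_unitsVal hS]
        simp [← sq, ENNReal.inv_pow]

lemma measure_inv_eq_setLIntegral (hK : ∀ u : Kˣ, distribHaarChar K u = ‖(u : K)‖₊) {N : Set K}
    (hN : MeasurableSet N) (h0 : 0 ∉ N) :
    μ N⁻¹ = ∫⁻ x in N, (‖x‖ₑ ^ 2)⁻¹ ∂μ := by
  obtain ⟨S, rfl⟩ : ∃ S : Set Kˣ, Units.val '' S = N :=
    Set.subset_range_iff_exists_image_eq.1 fun x hx =>
      ⟨Units.mk0 x (ne_of_mem_of_not_mem hx h0), rfl⟩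
  have hS : MeasurableSet S := measurableEmbedding_unitsVal.measurableSet_image.1 hN
  have himage : (Units.val '' S)⁻¹ = Units.val '' S⁻¹ := by
    simp_rw [← Set.image_inv_eq_inv, Set.image_image, Units.val_inv_eq_inv_val]
  rw [himage, ← measurableEmbedding_unitsVal.comap_apply, comap_unitsVal_inv μ hK hS,
    ← measurableEmbedding_unitsVal.lintegral_map fun x : K => (‖x‖ₑ ^ 2)⁻¹,
    measurableEmbedding_unitsVal.restrict_comap, measurableEmbedding_unitsVal.map_comap,
    Measure.restrict_restrict' hN, Set.inter_eq_right.2 (Set.image_subset_range ..)]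

end UnitsHaar

section Scaling

open scoped Pointwise

noncomputable instance (p : ℕ) [Fact p.Prime] : MeasurableSpace ℤ_[p] := borel _
instance (p : ℕ) [Fact p.Prime] : BorelSpace ℤ_[p] := ⟨rfl⟩

variable {p : ℕ} [Fact p.Prime]

lemma Zball_eq_closedBall : Zball p = Metric.closedBall 0 1 := by
  ext x
  simp [Zball]

lemma measurableSet_Zball : MeasurableSet (Zball p) :=
  Zball_eq_closedBall (p := p) ▸ measurableSet_closedBall

lemma isOpenEmbedding_algebraMap_padicInt :
    Topology.IsOpenEmbedding (algebraMap ℤ_[p] ℚ_[p]) :=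
  PadicInt.isOpenEmbedding_coe

lemma range_algebraMap_padicInt : Set.range (algebraMap ℤ_[p] ℚ_[p]) = Zball p := by
  ext x
  exact ⟨fun ⟨y, hy⟩ => hy ▸ y.2, fun hx => ⟨⟨x, hx⟩, rfl⟩⟩

instance (μ : Measure ℚ_[p]) [μ.IsAddHaarMeasure] :
    (μ.comap (algebraMap ℤ_[p] ℚ_[p])).IsAddHaarMeasure :=
  Measure.IsAddHaarMeasure.comap (mH := inferInstance) μ
    (f := (algebraMap ℤ_[p] ℚ_[p]).toAddMonoidHom) isOpenEmbedding_algebraMap_padicInt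

lemma index_ker_toZModPow (n : ℕ) :
    (PadicInt.toZModPow (p := p) n).toAddMonoidHom.ker.index = p ^ n := by
  have hsurj : (PadicInt.toZModPow (p := p) n).toAddMonoidHom.range = ⊤ :=
    AddMonoidHom.range_eq_top.2 (ZMod.ringHom_surjective (PadicInt.toZModPow n))
  rw [AddSubgroup.index_ker, hsurj, AddSubgroup.card_top, Nat.card_zmod]

lemma image_ker_toZModPow (n : ℕ) :
    algebraMap ℤ_[p] ℚ_[p] '' (PadicInt.toZModPow (p := p) n).toAddMonoidHom.ker =
      Metric.closedBall 0 ((p : ℝ) ^ (-n : ℤ)) := by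
  have hmem (x : ℤ_[p]) : x ∈ (PadicInt.toZModPow (p := p) n).toAddMonoidHom.ker ↔
      ‖(x : ℚ_[p])‖ ≤ (p : ℝ) ^ (-n : ℤ) := by
    rw [← PadicInt.norm_def, PadicInt.norm_le_pow_iff_mem_span_pow, ← PadicInt.ker_toZModPow]
    rfl
  ext x
  rw [mem_closedBall_zero_iff]
  constructor
  · rintro ⟨x, hx, rfl⟩
    exact (hmem x).1 hx
  · intro hx
    have hx1 : ‖x‖ ≤ 1 := hx.trans <|
      zpow_le_one_of_nonpos₀ (mod_cast (Fact.out : p.Prime).one_le) (by simp)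
    exact ⟨⟨x, hx1⟩, (hmem _).2 hx, rfl⟩

lemma pow_mul_measure_closedBall (μ : Measure ℚ_[p]) [μ.IsAddHaarMeasure] (n : ℕ) :
    (p : ENNReal) ^ n * μ (Metric.closedBall 0 ((p : ℝ) ^ (-n : ℤ))) = μ (Zball p) := by
  have hι : MeasurableEmbedding (algebraMap ℤ_[p] ℚ_[p]) :=
    isOpenEmbedding_algebraMap_padicInt.measurableEmbedding
  have hindex := index_ker_toZModPow (p := p) n
  have hfinite : (PadicInt.toZModPow (p := p) n).toAddMonoidHom.ker.FiniteIndex :=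
    ⟨by rw [hindex]; simp [(Fact.out : p.Prime).ne_zero]⟩
  have hmeas : MeasurableSet ((PadicInt.toZModPow (p := p) n).toAddMonoidHom.ker : Set ℤ_[p]) := by
    rw [← hι.measurableSet_image, image_ker_toZModPow]
    exact measurableSet_closedBall
  have := AddSubgroup.index_mul_measure _ hmeas (μ.comap (algebraMap ℤ_[p] ℚ_[p]))
  rwa [hindex, hι.comap_apply, hι.comap_apply, image_ker_toZModPow, Set.image_univ,
    range_algebraMap_padicInt, Nat.cast_pow] at this

lemma Pball_eq_closedBall : Pball p = Metric.closedBall 0 ((p : ℝ) ^ (-1 : ℤ)) := by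
  ext x
  simpa [Pball] using (Padic.norm_le_pow_iff_norm_lt_pow_add_one x (-1)).symm

lemma measurableSet_Pball : MeasurableSet (Pball p) :=
  Pball_eq_closedBall (p := p) ▸ measurableSet_closedBall

lemma Pball_subset_Zball : Pball p ⊆ Zball p := fun x (hx : ‖x‖ < 1) => hx.le

lemma measure_Pball (μ : Measure ℚ_[p]) [μ.IsAddHaarMeasure] :
    μ (Pball p) = μ (Zball p) * (p : ENNReal)⁻¹ := by
  have hp0 : (p : ENNReal) ≠ 0 := by simp [(Fact.out : p.Prime).ne_zero]
  have h := pow_mul_measure_closedBall μ 1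
  rw [Nat.cast_one, pow_one, ← Pball_eq_closedBall] at h
  rw [← h, mul_comm, ENNReal.inv_mul_cancel_left hp0 (by simp)]

lemma distribHaarChar_padic_of_norm_le_one {u : ℚ_[p]ˣ} (hu : ‖(u : ℚ_[p])‖ ≤ 1) :
    distribHaarChar ℚ_[p] u = ‖(u : ℚ_[p])‖₊ := by
  obtain ⟨n, hn⟩ : ∃ n : ℕ, ‖(u : ℚ_[p])‖ = (p : ℝ) ^ (-n : ℤ) := by
    obtain ⟨n, hn⟩ := Int.eq_ofNat_of_zero_le ((Padic.norm_le_one_iff_val_nonneg _).1 hu)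
    exact ⟨n, hn ▸ Padic.norm_eq_zpow_neg_valuation u.ne_zero⟩
  have hp0 : (p : ENNReal) ^ n ≠ 0 := by simp [(Fact.out : p.Prime).ne_zero]
  have hball : u • Metric.closedBall (0 : ℚ_[p]) 1 = Metric.closedBall 0 ((p : ℝ) ^ (-n : ℤ)) := by
    rw [Units.smul_def, smul_closedBall' u.ne_zero, smul_zero, mul_one, hn]
  have henorm : ((‖(u : ℚ_[p])‖₊ : NNReal) : ENNReal) = ((p : ENNReal) ^ n)⁻¹ := by
    have hp : (0 : ℝ) < p ^ n := by exact_mod_cast pow_pos (Fact.out : p.Prime).pos n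
    rw [← enorm_eq_nnnorm, ← ofReal_norm, hn, zpow_neg, zpow_natCast,
      ENNReal.ofReal_inv_of_pos hp, ENNReal.ofReal_pow (by positivity), ENNReal.ofReal_natCast]
  refine distribHaarChar_eq_of_measure_smul_eq_mul
    (s := Metric.closedBall 0 1) (μ := Measure.addHaar)
    (Metric.measure_closedBall_pos _ _ one_pos).ne' measure_closedBall_lt_top.ne ?_
  rw [hball, henorm, ← Zball_eq_closedBall, ← pow_mul_measure_closedBall _ n,
    ENNReal.inv_mul_cancel_left hp0 (by simp)]

lemma distribHaarChar_padic (u : ℚ_[p]ˣ) : distribHaarChar ℚ_[p] u = ‖(u : ℚ_[p])‖₊ := by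
  obtain hu | hu := le_total ‖(u : ℚ_[p])‖ 1
  · exact distribHaarChar_padic_of_norm_le_one hu
  · have hinv : ‖((u⁻¹ : ℚ_[p]ˣ) : ℚ_[p])‖ ≤ 1 := by simpa using inv_le_one_of_one_le₀ hu
    simpa using distribHaarChar_padic_of_norm_le_one hinv

end Scaling

section ProjectiveLine

open scoped Pointwise

variable {p : ℕ} [Fact p.Prime]

lemma mobius_mk {A : Matrix (Fin 2) (Fin 2) ℚ_[p]} (hA : A.det ≠ 0) {v : Fin 2 → ℚ_[p]}
    (hv : v ≠ 0) :
    mobius p A (.mk ℚ_[p] v hv) =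
      .mk ℚ_[p] (A.mulVec v) fun h => hv (Matrix.eq_zero_of_mulVec_eq_zero hA h) := by
  obtain ⟨a, ha⟩ := Projectivization.exists_smul_eq_mk_rep ℚ_[p] v hv
  rw [mobius, dif_pos fun h => Projectivization.rep_nonzero _
    (Matrix.eq_zero_of_mulVec_eq_zero hA h), Projectivization.mk_eq_mk_iff]
  exact ⟨a, by rw [← ha, Units.smul_def, Units.smul_def, Matrix.mulVec_smul]⟩

lemma mk_mem_iota_image {v : Fin 2 → ℚ_[p]} (hv : v ≠ 0) {M : Set ℚ_[p]} :
    Projectivization.mk ℚ_[p] v hv ∈ iota p '' M ↔ v 1 ≠ 0 ∧ v 0 / v 1 ∈ M := by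
  simp only [Set.mem_image, iota, Projectivization.mk_eq_mk_iff']
  constructor
  · rintro ⟨x, hx, a, ha⟩
    have h0 : a * v 0 = x := by simpa using congrFun ha 0
    have h1 : a * v 1 = 1 := by simpa using congrFun ha 1
    have hv1 : v 1 ≠ 0 := right_ne_zero_of_mul_eq_one h1
    have hdiv : v 0 / v 1 = x := by rw [← h0, div_eq_iff hv1, mul_right_comm, h1, one_mul]
    exact ⟨hv1, hdiv.symm ▸ hx⟩
  · rintro ⟨hv1, hx⟩
    refine ⟨_, hx, (v 1)⁻¹, ?_⟩
    ext i
    fin_cases i <;> simp [hv1, div_eq_inv_mul]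

lemma iota_mem_iota_image {x : ℚ_[p]} {M : Set ℚ_[p]} : iota p x ∈ iota p '' M ↔ x ∈ M := by
  simp [iota, mk_mem_iota_image, -Set.mem_image]

lemma injective_iota : Function.Injective (iota p) := fun x y h => by
  simpa [h] using (iota_mem_iota_image (x := x) (M := {y})).1

lemma continuous_iota : Continuous (iota p) :=
  continuous_quotient_mk'.comp <| Continuous.subtype_mk (by fun_prop) _

lemma isOpenMap_iota : IsOpenMap (iota p) := fun U hU => by
  have hcoord (i : Fin 2) : Continuous fun v : {v : Fin 2 → ℚ_[p] // v ≠ 0} => v.1 i :=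
    (continuous_apply i).comp continuous_subtype_val
  have hopen : IsOpen ({v : {v : Fin 2 → ℚ_[p] // v ≠ 0} | v.1 1 ≠ 0} ∩
      (fun v => v.1 0 / v.1 1) ⁻¹' U) :=
    ((hcoord 0).continuousOn.div (hcoord 1).continuousOn fun _ hv => hv).isOpen_inter_preimage
      (isOpen_ne_fun (hcoord 1) continuous_const) hU
  have hpre : (fun v => Projectivization.mk ℚ_[p] v.1 v.2) ⁻¹' (iota p '' U) =
      {v : {v : Fin 2 → ℚ_[p] // v ≠ 0} | v.1 1 ≠ 0} ∩ (fun v => v.1 0 / v.1 1) ⁻¹' U :=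
    Set.ext fun v => mk_mem_iota_image v.2
  exact isQuotientMap_quotient_mk'.isOpen_preimage.1 (hpre ▸ hopen)

lemma measurableEmbedding_iota : MeasurableEmbedding (iota p) :=
  (Topology.IsOpenEmbedding.of_continuous_injective_isOpenMap
    continuous_iota injective_iota isOpenMap_iota).measurableEmbedding

lemma mobius_translation_iota (a x : ℚ_[p]) :
    mobius p !![1, a; 0, 1] (iota p x) = iota p (a + x) := by
  rw [iota, mobius_mk (by simp)]
  congr 1
  ext i
  fin_cases i <;> simp [add_comm]

lemma involutive_mobius_swap : Function.Involutive (mobius p !![0, 1; 1, 0]) := fun ξ => by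
  induction ξ using Projectivization.ind with
  | h v hv =>
    simp_rw [mobius_mk (p := p) (A := !![0, 1; 1, 0]) (by simp)]
    congr 1
    ext i
    fin_cases i <;> simp [Matrix.vecHead, Matrix.vecTail]

lemma mk_mem_mobius_swap_image {v : Fin 2 → ℚ_[p]} (hv : v ≠ 0) {M : Set ℚ_[p]} :
    Projectivization.mk ℚ_[p] v hv ∈ mobius p !![0, 1; 1, 0] '' (iota p '' M) ↔
      v 0 ≠ 0 ∧ v 1 / v 0 ∈ M := by
  rw [Set.image_eq_preimage_of_inverse involutive_mobius_swap.leftInverse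
    involutive_mobius_swap.rightInverse, Set.mem_preimage, mobius_mk (by simp), mk_mem_iota_image]
  simp [Matrix.vecHead, Matrix.vecTail]

lemma mobius_swap_image_iota_image {M : Set ℚ_[p]} (hM : 0 ∉ M) :
    mobius p !![0, 1; 1, 0] '' (iota p '' M) = iota p '' M⁻¹ := by
  ext ξ
  induction ξ using Projectivization.ind with
  | h v hv =>
    rw [mk_mem_mobius_swap_image, mk_mem_iota_image, Set.mem_inv, inv_div]
    have hne (h : v 1 / v 0 ∈ M) : v 1 ≠ 0 ∧ v 0 ≠ 0 :=
      div_ne_zero_iff.1 (ne_of_mem_of_not_mem h hM)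
    tauto

lemma mobius_swap_image_iota_image_Pball :
    mobius p !![0, 1; 1, 0] '' (iota p '' Pball p) = (iota p '' Zball p)ᶜ := by
  ext ξ
  induction ξ using Projectivization.ind with
  | h v hv =>
    rw [mk_mem_mobius_swap_image, Set.mem_compl_iff, mk_mem_iota_image]
    simp only [Pball, Zball, Set.mem_ofPred_eq, norm_div]
    obtain h1 | h1 := eq_or_ne (v 1) 0
    · have h0 : v 0 ≠ 0 := fun h0 => hv (by ext i; fin_cases i <;> assumption)
      simp [h0, h1]
    obtain h0 | h0 := eq_or_ne (v 0) 0
    · simp [h0, h1]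
    · simp [h0, h1, div_lt_one, div_le_one]

end ProjectiveLine

namespace IsGLInvariant

open scoped Pointwise

variable {p : ℕ} [Fact p.Prime] {ν : Measure (P1 p)}

lemma measure_mobius_swap_image (hν : IsGLInvariant p ν) {T : Set (P1 p)} (hT : MeasurableSet T) :
    ν (mobius p !![0, 1; 1, 0] '' T) = ν T :=
  hν _ (fun i j => by fin_cases i <;> fin_cases j <;> simp) (by simp) T hT

lemma measure_iota_image_inv (hν : IsGLInvariant p ν) {M : Set ℚ_[p]} (hM : MeasurableSet M)
    (h0 : 0 ∉ M) : ν (iota p '' M⁻¹) = ν (iota p '' M) := by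
  rw [← mobius_swap_image_iota_image h0,
    hν.measure_mobius_swap_image (measurableEmbedding_iota.measurableSet_image.2 hM)]

lemma measure_iota_image_add (hν : IsGLInvariant p ν) {a : ℚ_[p]} (ha : ‖a‖ ≤ 1) {M : Set ℚ_[p]}
    (hM : MeasurableSet M) : ν (iota p '' ((a + ·) '' M)) = ν (iota p '' M) := by
  rw [← hν !![1, a; 0, 1] (fun i j => by fin_cases i <;> fin_cases j <;> simp [ha]) (by simp) _
    (measurableEmbedding_iota.measurableSet_image.2 hM)]
  simp_rw [Set.image_image, mobius_translation_iota]

lemma isAddLeftInvariant_comap (hν : IsGLInvariant p ν) :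
    (ν.comap (iota p ∘ algebraMap ℤ_[p] ℚ_[p])).IsAddLeftInvariant := by
  have hpad : MeasurableEmbedding (algebraMap ℤ_[p] ℚ_[p]) :=
    isOpenEmbedding_algebraMap_padicInt.measurableEmbedding
  have hemb : MeasurableEmbedding (iota p ∘ algebraMap ℤ_[p] ℚ_[p]) :=
    measurableEmbedding_iota.comp hpad
  refine (forall_measure_preimage_add_iff _).1 fun a S hS => ?_
  have himage : (algebraMap ℤ_[p] ℚ_[p] a + ·) '' (algebraMap ℤ_[p] ℚ_[p] '' ((a + ·) ⁻¹' S)) =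
      algebraMap ℤ_[p] ℚ_[p] '' S := by
    simp_rw [Set.image_image, ← map_add]
    rw [← Set.image_image _ (a + ·), Set.image_preimage_eq _ (add_left_surjective a)]
  have htrans := hν.measure_iota_image_add a.2
    (hpad.measurableSet_image.2 (measurable_const_add a hS))
  rw [hemb.comap_apply, hemb.comap_apply, Set.image_comp, Set.image_comp, ← himage]
  exact htrans.symm

lemma measure_iota_image_of_subset_Zball [IsFiniteMeasure ν] (hν : IsGLInvariant p ν)
    {μ : Measure ℚ_[p]} [μ.IsAddHaarMeasure] (hμ : μ (Zball p) = 1) {M : Set ℚ_[p]}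
    (hM : M ⊆ Zball p) : ν (iota p '' M) = ν (iota p '' Zball p) * μ M := by
  have hpad : MeasurableEmbedding (algebraMap ℤ_[p] ℚ_[p]) :=
    isOpenEmbedding_algebraMap_padicInt.measurableEmbedding
  have hemb : MeasurableEmbedding (iota p ∘ algebraMap ℤ_[p] ℚ_[p]) :=
    measurableEmbedding_iota.comp hpad
  have := hν.isAddLeftInvariant_comap
  obtain ⟨c, hc⟩ : ∃ c : NNReal, ν.comap (iota p ∘ algebraMap ℤ_[p] ℚ_[p]) =
      c • μ.comap (algebraMap ℤ_[p] ℚ_[p]) :=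
    ⟨_, Measure.isAddInvariant_eq_smul_of_compactSpace _ _⟩
  have happly {N : Set ℚ_[p]} (hN : N ⊆ Zball p) : ν (iota p '' N) = c * μ N := by
    rw [← range_algebraMap_padicInt] at hN
    obtain ⟨S, rfl⟩ := Set.subset_range_iff_exists_image_eq.1 hN
    rw [← Set.image_comp, ← hemb.comap_apply, hc, Measure.smul_apply, hpad.comap_apply,
      ENNReal.smul_def, smul_eq_mul]
  rw [happly hM, happly subset_rfl, hμ, mul_one]

lemma measure_iota_image_Zball [IsProbabilityMeasure ν] (hν : IsGLInvariant p ν)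
    {μ : Measure ℚ_[p]} [μ.IsAddHaarMeasure] (hμ : μ (Zball p) = 1) :
    ν (iota p '' Zball p) = p / (p + 1) := by
  have hp0 : (p : ENNReal) ≠ 0 := by simp [(Fact.out : p.Prime).ne_zero]
  have hcompl : ν (iota p '' Zball p)ᶜ = ν (iota p '' Zball p) * (p : ENNReal)⁻¹ := by
    rw [← mobius_swap_image_iota_image_Pball, hν.measure_mobius_swap_image
      (measurableEmbedding_iota.measurableSet_image.2 measurableSet_Pball),
      hν.measure_iota_image_of_subset_Zball hμ Pball_subset_Zball, measure_Pball, hμ, one_mul]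
  have htotal : ν (iota p '' Zball p) + ν (iota p '' Zball p) * (p : ENNReal)⁻¹ = 1 := by
    rw [← hcompl, prob_add_prob_compl
      (measurableEmbedding_iota.measurableSet_image.2 measurableSet_Zball)]
  rw [ENNReal.eq_div_iff (by simp) (by simp)]
  calc ((p : ENNReal) + 1) * ν (iota p '' Zball p)
      = p * (ν (iota p '' Zball p) + ν (iota p '' Zball p) * (p : ENNReal)⁻¹) := by
        rw [mul_add, mul_left_comm, ENNReal.mul_inv_cancel hp0 (by simp)]
        ring
    _ = p := by rw [htotal, mul_one]

lemma measure_iota_image_of_subset_compl_Zball [IsFiniteMeasure ν] (hν : IsGLInvariant p ν)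
    {μ : Measure ℚ_[p]} [μ.IsAddHaarMeasure] (hμ : μ (Zball p) = 1) {M : Set ℚ_[p]}
    (hM : MeasurableSet M) (hMZ : M ⊆ (Zball p)ᶜ) :
    ν (iota p '' M) = ν (iota p '' Zball p) * ∫⁻ x in M, (‖x‖ₑ ^ 2)⁻¹ ∂μ := by
  have h0 : 0 ∉ M := fun h => hMZ h (by simp [Zball])
  have hinv : M⁻¹ ⊆ Zball p := fun x hx => by
    have hx' : 1 < ‖x‖⁻¹ := by simpa [Zball] using hMZ hx
    exact ((one_lt_inv_iff₀).1 hx').2.le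
  rw [← hν.measure_iota_image_inv hM h0, hν.measure_iota_image_of_subset_Zball hμ hinv,
    measure_inv_eq_setLIntegral μ distribHaarChar_padic hM h0]

end IsGLInvariant

section Density

variable {p : ℕ} [Fact p.Prime] (μ : Measure ℚ_[p]) {M : Set ℚ_[p]}

lemma setLIntegral_inv_max_one_sq_of_subset_Zball (hM : MeasurableSet M) (hMZ : M ⊆ Zball p) :
    ∫⁻ x in M, ENNReal.ofReal (max 1 (‖x‖ ^ 2))⁻¹ ∂μ = μ M := by
  rw [← setLIntegral_one]
  refine setLIntegral_congr_fun hM fun x hx => ?_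
  rw [max_eq_left (pow_le_one₀ (norm_nonneg x) (hMZ hx)), inv_one, ENNReal.ofReal_one]

lemma setLIntegral_inv_max_one_sq_of_subset_compl_Zball (hM : MeasurableSet M)
    (hMZ : M ⊆ (Zball p)ᶜ) :
    ∫⁻ x in M, ENNReal.ofReal (max 1 (‖x‖ ^ 2))⁻¹ ∂μ = ∫⁻ x in M, (‖x‖ₑ ^ 2)⁻¹ ∂μ := by
  refine setLIntegral_congr_fun hM fun x hx => ?_
  have hx1 : 1 < ‖x‖ := by simpa [Zball] using hMZ hx
  rw [max_eq_right (one_le_pow₀ hx1.le), ENNReal.ofReal_inv_of_pos (by positivity),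
    ENNReal.ofReal_pow (norm_nonneg x), ofReal_norm]

end Density

theorem statement_18 (p : ℕ) [Fact p.Prime]
    (μ : Measure ℚ_[p]) [SigmaFinite μ] [μ.IsAddHaarMeasure] (hμ : μ (Zball p) = 1)
    (ν : Measure (P1 p)) [IsProbabilityMeasure ν] (hν : IsGLInvariant p ν)
    (M : Set ℚ_[p]) (hM : MeasurableSet M) :
    ν (iota p '' M) =
      (p : ENNReal) / ((p : ENNReal) + 1) *
        ∫⁻ x in M, ENNReal.ofReal ((max 1 (‖x‖ ^ 2))⁻¹) ∂μ := by
  have hinter : MeasurableSet (M ∩ Zball p) := hM.inter measurableSet_Zball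
  have hsdiff : MeasurableSet (M \ Zball p) := hM.diff measurableSet_Zball
  have hsdiff_subset : M \ Zball p ⊆ (Zball p)ᶜ := fun _ hx => hx.2
  have hsplit : ν (iota p '' M) = ν (iota p '' (M ∩ Zball p)) + ν (iota p '' (M \ Zball p)) := by
    rw [← measurableEmbedding_iota.comap_apply, ← measurableEmbedding_iota.comap_apply,
      ← measurableEmbedding_iota.comap_apply, measure_inter_add_sdiff M measurableSet_Zball]
  rw [hsplit, hν.measure_iota_image_of_subset_Zball hμ Set.inter_subset_right,
    hν.measure_iota_image_of_subset_compl_Zball hμ hsdiff hsdiff_subset,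
    hν.measure_iota_image_Zball hμ, ← mul_add,
    ← setLIntegral_inv_max_one_sq_of_subset_Zball μ hinter Set.inter_subset_right,
    ← setLIntegral_inv_max_one_sq_of_subset_compl_Zball μ hsdiff hsdiff_subset,
    lintegral_inter_add_sdiff _ M measurableSet_Zball]

end LogCoulomb
end

section
/- For every prime p and every β ∈ ℂ with Re(β) > −1/6, the integral ∫_{ℤ_p³} |x_1−x_2|_p^{2β}·|x_1−x_3|_p^{3β}·|x_2−x_3|_p^{6β} dμ³ (the canonical partition function Z_3(ℤ_p,β) of a log-Coulomb gas in ℤ_p with three particles of charges 1, 2, 3) converges absolutely and equals [p^{11β}/(p^{2+11β} − 1)] · ((p−1)(p−2) + (p−1)²·[1/(p^{1+2β} − 1) + 1/(p^{1+3β} − 1) + 1/(p^{1+6β} − 1)]). -/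
open MeasureTheory
open scoped LinearAlgebra.Projectivization

namespace LogCoulomb

/-
Write `B` for the closed unit ball and `S` for the unit sphere of `ℚ_p × ℚ_p`. Since the unit ball
of `ℚ_p` is a group, translating by the third particle leaves the integral over `B` of
`|u - v|^a |u|^b |v|^c`. This integrand is homogeneous under multiplication by `p`, which maps `B`
onto `B \ S` and divides the measure by `p ^ 2`. Hence the integral over `S` is
`1 - p ^ (-(a + b + c) - 2)` times the integral over `B`, and convergence on `B` reduces, by a
geometric series, to convergence on `S`. By the ultrametric inequality at most one of the three
factors differs from `1` at a point of `S`, so there the product is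
`|u - v|^a + |u|^b + |v|^c - 2`. Each of the three summands is pulled back from `ℚ_p` by a
measure-preserving linear form, and the same homogeneity evaluates its integral.
-/

open Metric Set
open scoped NNReal Pointwise

section Homogeneous

variable {𝕜 E : Type*} [NormedField 𝕜] [NormedAddCommGroup E] [NormedSpace 𝕜 E] {t : 𝕜}

theorem closedBall_sdiff_zero_subset_iUnion_pow_smul (ht : t ≠ 0) (ht1 : ‖t‖ < 1) :
    closedBall (0 : E) 1 \ {0} ⊆ ⋃ n : ℕ, t ^ n • (closedBall 0 1 \ closedBall 0 ‖t‖) := by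
  rintro x ⟨hx1, hx0⟩
  obtain ⟨n, hlt, hle⟩ := exists_nat_pow_near_of_lt_one (norm_pos_iff.2 hx0)
    (mem_closedBall_zero_iff.1 hx1) (norm_pos_iff.2 ht) ht1
  have htn : 0 < ‖t‖ ^ n := pow_pos (norm_pos_iff.2 ht) n
  refine mem_iUnion.2 ⟨n, (mem_smul_set_iff_inv_smul_mem₀ (pow_ne_zero n ht) _ _).2 ?_⟩
  rw [mem_sdiff, mem_closedBall_zero_iff, mem_closedBall_zero_iff, norm_smul, norm_inv, norm_pow,
    not_le, inv_mul_le_iff₀ htn, lt_inv_mul_iff₀ htn, mul_one, ← pow_succ]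
  exact ⟨hle, hlt⟩

variable {𝕂 : Type*} [MeasurableSpace E] [BorelSpace E] [RCLike 𝕂] {ν : Measure E} {κ : ℝ≥0}
  {f : E → 𝕂} {c : 𝕂} {s : Set E}

theorem integrableOn_smul_set_of_homogeneous (ht : t ≠ 0) (hκ : κ ≠ 0)
    (hν : ν.map (t • ·) = κ • ν) (hf : ∀ x, f (t • x) = c * f x) (hs : IntegrableOn f s ν) :
    IntegrableOn f (t • s) ν := by
  have hmap : IntegrableOn f (t • s) (ν.map (t • ·)) := by
    rw [(measurableEmbedding_const_smul₀ ht).integrableOn_map_iff, preimage_smul₀ ht,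
      inv_smul_smul₀ ht]
    exact (hs.const_mul c).congr (.of_forall fun x ↦ (hf x).symm)
  rw [hν, IntegrableOn, Measure.restrict_smul] at hmap
  exact (integrable_smul_measure (ENNReal.coe_ne_zero.2 hκ) ENNReal.coe_ne_top).1 hmap

theorem setIntegral_smul_set_of_homogeneous (ht : t ≠ 0) (hκ : κ ≠ 0)
    (hν : ν.map (t • ·) = κ • ν) (hf : ∀ x, f (t • x) = c * f x) :
    ∫ x in t • s, f x ∂ν = c / (κ : ℝ) * ∫ x in s, f x ∂ν := by
  have hmap : ((κ : ℝ) : 𝕂) * ∫ x in t • s, f x ∂ν = c * ∫ x in s, f x ∂ν := by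
    calc ((κ : ℝ) : 𝕂) * ∫ x in t • s, f x ∂ν
        = ∫ x in t • s, f x ∂(ν.map (t • ·)) := by
          rw [hν, Measure.restrict_smul, integral_smul_nnreal_measure, NNReal.smul_def,
            RCLike.real_smul_eq_coe_mul]
      _ = ∫ x in s, f (t • x) ∂ν := by
          rw [(measurableEmbedding_const_smul₀ ht).setIntegral_map, preimage_smul₀ ht,
            inv_smul_smul₀ ht]
      _ = c * ∫ x in s, f x ∂ν := by simp_rw [hf, integral_const_mul]
  have hκ' : ((κ : ℝ) : 𝕂) ≠ 0 := by exact_mod_cast hκ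
  rw [div_mul_eq_mul_div, eq_div_iff hκ', mul_comm, hmap]

theorem integrableOn_pow_smul_set_of_homogeneous (ht : t ≠ 0) (hκ : κ ≠ 0)
    (hν : ν.map (t • ·) = κ • ν) (hf : ∀ x, f (t • x) = c * f x) (hs : IntegrableOn f s ν)
    (n : ℕ) : IntegrableOn f (t ^ n • s) ν := by
  induction n with
  | zero => simpa using hs
  | succ n ih =>
    rw [pow_succ', mul_smul]
    exact integrableOn_smul_set_of_homogeneous ht hκ hν hf ih

theorem setIntegral_pow_smul_set_of_homogeneous (ht : t ≠ 0) (hκ : κ ≠ 0)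
    (hν : ν.map (t • ·) = κ • ν) (hf : ∀ x, f (t • x) = c * f x) (n : ℕ) :
    ∫ x in t ^ n • s, f x ∂ν = (c / (κ : ℝ)) ^ n * ∫ x in s, f x ∂ν := by
  induction n with
  | zero => simp
  | succ n ih =>
    rw [pow_succ', mul_smul, setIntegral_smul_set_of_homogeneous ht hκ hν hf, ih, pow_succ',
      mul_assoc]

theorem integrableOn_closedBall_of_homogeneous [NullSingletonClass ν] (ht : t ≠ 0) (ht1 : ‖t‖ < 1)
    (hν : ν.map (t • ·) = κ • ν) (hf : ∀ x, f (t • x) = c * f x) (hc : ‖c‖ < κ)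
    (hs : IntegrableOn f (closedBall 0 1 \ closedBall 0 ‖t‖) ν) :
    IntegrableOn f (closedBall 0 1) ν := by
  have hκ0 : (0 : ℝ) < κ := (norm_nonneg c).trans_lt hc
  have hκ : κ ≠ 0 := by exact_mod_cast hκ0.ne'
  have hf_norm (x : E) : ‖f (t • x)‖ = ‖c‖ * ‖f x‖ := by rw [hf, norm_mul]
  have hsum : Summable fun n : ℕ ↦
      ∫ x in t ^ n • (closedBall (0 : E) 1 \ closedBall 0 ‖t‖), ‖f x‖ ∂ν := by
    simp_rw [setIntegral_pow_smul_set_of_homogeneous (f := (‖f ·‖)) ht hκ hν hf_norm]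
    exact (summable_geometric_of_lt_one (by positivity) ((div_lt_one hκ0).2 hc)).mul_right _
  have hdiff : IntegrableOn f (closedBall 0 1 \ {0}) ν :=
    (integrableOn_iUnion_of_summable_integral_norm
      (integrableOn_pow_smul_set_of_homogeneous ht hκ hν hf hs) hsum).mono_set
      (closedBall_sdiff_zero_subset_iUnion_pow_smul ht ht1)
  exact hdiff.congr_set_ae (sdiff_null_ae_eq_self (measure_singleton 0)).symm

theorem setIntegral_closedBall_sdiff_closedBall_of_homogeneous (ht : t ≠ 0) (ht1 : ‖t‖ ≤ 1)
    (hκ : κ ≠ 0) (hν : ν.map (t • ·) = κ • ν) (hf : ∀ x, f (t • x) = c * f x)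
    (hint : IntegrableOn f (closedBall 0 1) ν) :
    ∫ x in closedBall 0 1 \ closedBall 0 ‖t‖, f x ∂ν =
      (1 - c / (κ : ℝ)) * ∫ x in closedBall 0 1, f x ∂ν := by
  have hball : closedBall (0 : E) ‖t‖ = t • closedBall (0 : E) 1 := by
    rw [smul_closedBall' ht, smul_zero, mul_one]
  rw [setIntegral_sdiff measurableSet_closedBall hint (closedBall_subset_closedBall ht1), hball,
    setIntegral_smul_set_of_homogeneous ht hκ hν hf]
  ring

theorem map_smul_prod {F : Type*} [NormedAddCommGroup F] [NormedSpace 𝕜 F] [MeasurableSpace F]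
    [BorelSpace F] {μ : Measure F} {ξ : ℝ≥0} [SFinite μ] [SFinite ν]
    (hμ : μ.map (t • ·) = ξ • μ) (hν : ν.map (t • ·) = κ • ν) :
    (μ.prod ν).map (t • ·) = (ξ * κ) • μ.prod ν := by
  calc (μ.prod ν).map (t • ·) = (μ.map (t • ·)).prod (ν.map (t • ·)) :=
        (Measure.map_prod_map μ ν (measurable_const_smul t) (measurable_const_smul t)).symm
    _ = (ξ * κ) • μ.prod ν := by
        rw [hμ, hν, Measure.prod_smul_left, Measure.prod_smul_right, smul_smul]

end Homogeneous

section Ultrametric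

theorem measurePreserving_snd_sub_comp_fst {α E : Type*} [MeasurableSpace α] [MeasurableSpace E]
    [Sub E] [MeasurableSub₂ E] {m : Measure α} [IsProbabilityMeasure m] {ν : Measure E} [SFinite ν]
    {c : α → E} (hc : Measurable c) (h : ∀ᵐ z ∂m, MeasurePreserving (· - c z) ν ν) :
    MeasurePreserving (fun w : α × E ↦ w.2 - c w.1) (m.prod ν) ν :=
  measurePreserving_snd.comp <| (MeasurePreserving.id m).skew_product
    (measurable_snd.sub (hc.comp measurable_fst)) (h.mono fun _ hz ↦ hz.map_eq)

variable {E : Type*} [NormedAddCommGroup E] [MeasurableSpace E] {μ : Measure E} {r : ℝ}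

theorem prod_restrict_closedBall [SFinite μ] :
    (μ.restrict (closedBall 0 r)).prod (μ.restrict (closedBall 0 r)) =
      (μ.prod μ).restrict (closedBall 0 r) := by
  rw [Measure.prod_restrict, closedBall_prod_same, Prod.mk_zero_zero]

theorem measurePreserving_fst_closedBall [SFinite μ] (hμ : μ (closedBall 0 r) = 1) :
    MeasurePreserving Prod.fst
      ((μ.prod μ).restrict (closedBall 0 r)) (μ.restrict (closedBall 0 r)) := by
  have : IsProbabilityMeasure (μ.restrict (closedBall 0 r)) := ⟨by simp [hμ]⟩
  exact prod_restrict_closedBall (μ := μ) ▸ measurePreserving_fst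

theorem measurePreserving_snd_closedBall [SFinite μ] (hμ : μ (closedBall 0 r) = 1) :
    MeasurePreserving Prod.snd
      ((μ.prod μ).restrict (closedBall 0 r)) (μ.restrict (closedBall 0 r)) := by
  have : IsProbabilityMeasure (μ.restrict (closedBall 0 r)) := ⟨by simp [hμ]⟩
  exact prod_restrict_closedBall (μ := μ) ▸ measurePreserving_snd

variable [BorelSpace E]

theorem measurePreserving_sub_right_closedBall [IsUltrametricDist E] [μ.IsAddRightInvariant]
    {z : E} (hz : z ∈ closedBall 0 r) :
    MeasurePreserving (· - z) (μ.restrict (closedBall 0 r)) (μ.restrict (closedBall 0 r)) := by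
  have hpre : (· - z) ⁻¹' closedBall 0 r = closedBall 0 r := by
    calc (· - z) ⁻¹' closedBall 0 r = closedBall z r := by ext x; simp [dist_eq_norm]
      _ = closedBall 0 r := (IsUltrametricDist.closedBall_eq_of_mem hz).symm
  simpa only [hpre] using
    (measurePreserving_sub_right μ z).restrict_preimage (measurableSet_closedBall (x := 0) (ε := r))

variable [SecondCountableTopology E]

theorem measurePreserving_sub_last_closedBall [IsUltrametricDist E] [μ.IsAddRightInvariant]
    (hμ : μ (closedBall 0 r) = 1) (n : ℕ) :
    MeasurePreserving (fun (x : Fin (n + 1) → E) (i : Fin n) ↦ x i.castSucc - x (.last n))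
      (Measure.pi fun _ ↦ μ.restrict (closedBall 0 r))
      (Measure.pi fun _ ↦ μ.restrict (closedBall 0 r)) := by
  have : IsProbabilityMeasure (μ.restrict (closedBall 0 r)) := ⟨by simp [hμ]⟩
  set m := μ.restrict (closedBall 0 r)
  have hsplit : MeasurePreserving
      (fun x : Fin (n + 1) → E ↦ (x (.last n), fun i : Fin n ↦ x i.castSucc))
      (Measure.pi fun _ ↦ m) (m.prod (Measure.pi fun _ ↦ m)) := by
    convert measurePreserving_piFinSuccAbove (fun _ : Fin (n + 1) ↦ m) (.last n) using 2 with x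
    ext i <;> simp [MeasurableEquiv.piFinSuccAbove, Fin.init]
  have hsub : ∀ᵐ z ∂m, MeasurePreserving (· - fun _ : Fin n ↦ z)
      (Measure.pi fun _ ↦ m) (Measure.pi fun _ ↦ m) := by
    filter_upwards [ae_restrict_mem measurableSet_closedBall] with z hz
    exact measurePreserving_pi (fun _ ↦ m) (fun _ ↦ m) fun _ ↦
      measurePreserving_sub_right_closedBall hz
  exact (measurePreserving_snd_sub_comp_fst (by fun_prop) hsub).comp hsplit

theorem measurePreserving_fst_sub_snd_closedBall [IsUltrametricDist E] [SFinite μ]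
    [μ.IsAddRightInvariant] (hμ : μ (closedBall 0 r) = 1) :
    MeasurePreserving (fun w : E × E ↦ w.1 - w.2)
      ((μ.prod μ).restrict (closedBall 0 r)) (μ.restrict (closedBall 0 r)) := by
  have : IsProbabilityMeasure (μ.restrict (closedBall 0 r)) := ⟨by simp [hμ]⟩
  rw [← prod_restrict_closedBall]
  refine (measurePreserving_snd_sub_comp_fst measurable_id ?_).comp Measure.measurePreserving_swap
  filter_upwards [ae_restrict_mem measurableSet_closedBall] with z hz
  exact measurePreserving_sub_right_closedBall hz

theorem measurePreserving_relative_positions [IsUltrametricDist E] [SFinite μ]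
    [μ.IsAddRightInvariant] (hμ : μ (closedBall 0 r) = 1) :
    MeasurePreserving (fun x : Fin 3 → E ↦ (x 0 - x 2, x 1 - x 2))
      (Measure.pi fun _ ↦ μ.restrict (closedBall 0 r)) ((μ.prod μ).restrict (closedBall 0 r)) := by
  have : IsProbabilityMeasure (μ.restrict (closedBall 0 r)) := ⟨by simp [hμ]⟩
  rw [← prod_restrict_closedBall]
  exact (measurePreserving_piFinTwo fun _ ↦ μ.restrict (closedBall 0 r)).comp
    (measurePreserving_sub_last_closedBall hμ 2)

end Ultrametric

section Padic

variable {p : ℕ} [hp : Fact p.Prime] {μ : Measure ℚ_[p]}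

theorem closedBall_norm_p : closedBall (0 : ℚ_[p]) ‖(p : ℚ_[p])‖ = ball 0 1 := by
  ext x
  simpa using Padic.norm_le_pow_iff_norm_lt_pow_add_one x (-1)

theorem closedBall_prod_norm_p :
    closedBall (0 : ℚ_[p] × ℚ_[p]) ‖(p : ℚ_[p])‖ = ball 0 1 := by
  rw [← Prod.mk_zero_zero, ← closedBall_prod_same, closedBall_norm_p, ball_prod_same]

theorem closedBall_eq_iUnion_ball_natCast :
    closedBall (0 : ℚ_[p]) 1 = ⋃ i ∈ Finset.range p, ball (i : ℚ_[p]) 1 := by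
  ext x
  simp only [mem_iUnion, Finset.mem_range, exists_prop]
  constructor
  · intro hx
    obtain ⟨y, rfl⟩ : ∃ y : ℤ_[p], (y : ℚ_[p]) = x := ⟨⟨x, mem_closedBall_zero_iff.1 hx⟩, rfl⟩
    obtain ⟨i, hi, hyi⟩ := PadicInt.exists_mem_range y
    refine ⟨i, hi, ?_⟩
    rwa [PadicInt.maximalIdeal_eq_span_p, Ideal.mem_span_singleton,
      ← PadicInt.norm_lt_one_iff_dvd, PadicInt.norm_def, PadicInt.coe_sub, PadicInt.coe_natCast,
      ← mem_ball_iff_norm] at hyi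
  · rintro ⟨i, -, hxi⟩
    rw [IsUltrametricDist.closedBall_eq_of_mem (y := (i : ℚ_[p]))
      (by simpa using Padic.norm_int_le_one (p := p) i)]
    exact ball_subset_closedBall hxi

theorem pairwiseDisjoint_ball_natCast :
    (Finset.range p : Set ℕ).PairwiseDisjoint fun i ↦ ball (i : ℚ_[p]) 1 := by
  intro i hi j hj hij
  refine (IsUltrametricDist.ball_eq_or_disjoint _ _ _).resolve_left fun heq ↦ hij ?_
  have hmem : (i : ℚ_[p]) ∈ ball (j : ℚ_[p]) 1 := heq ▸ mem_ball_self one_pos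
  have hdvd : (p : ℤ) ∣ i - j := by
    rw [← Padic.norm_intCast_lt_one_iff (p := p)]
    simpa [dist_eq_norm] using hmem
  rw [Finset.coe_range, mem_Iio] at hi hj
  have := Int.eq_zero_of_abs_lt_dvd hdvd (by rw [abs_lt]; omega)
  omega

theorem measure_closedBall_zero_one [μ.IsAddHaarMeasure] :
    μ (closedBall 0 1) = p * μ (ball 0 1) := by
  rw [closedBall_eq_iUnion_ball_natCast, measure_biUnion_finset pairwiseDisjoint_ball_natCast
    fun _ _ ↦ measurableSet_ball]
  simp [Measure.addHaar_ball_center]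

theorem map_p_smul [μ.IsAddHaarMeasure] : μ.map ((p : ℚ_[p]) • ·) = (p : ℝ≥0) • μ := by
  have hp0 : (p : ℚ_[p]) ≠ 0 := Nat.cast_ne_zero.2 hp.out.ne_zero
  have hHaar : (μ.map ((p : ℚ_[p]) • ·)).IsAddHaarMeasure :=
    (ContinuousLinearEquiv.smulLeft (R₁ := ℚ_[p])
      (Units.mk0 (p : ℚ_[p]) hp0)).isAddHaarMeasure_map μ
  have hscale := Measure.isAddLeftInvariant_eq_smul (μ.map ((p : ℚ_[p]) • ·)) μ
  set k := Measure.addHaarScalarFactor (μ.map ((p : ℚ_[p]) • ·)) μ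
  have hpre : ((p : ℚ_[p]) • ·) ⁻¹' ball (0 : ℚ_[p]) 1 = closedBall 0 1 := by
    rw [← closedBall_norm_p, preimage_smul₀ hp0, smul_closedBall' (inv_ne_zero hp0), smul_zero,
      norm_inv, inv_mul_cancel₀ (norm_ne_zero_iff.2 hp0)]
  have hk : (k : ENNReal) * μ (ball 0 1) = p * μ (ball 0 1) := by
    rw [← measure_closedBall_zero_one, ← hpre, ← Measure.map_apply (measurable_const_smul _)
      measurableSet_ball, hscale]
    rfl
  have hkp : (k : ENNReal) = p :=
    (ENNReal.mul_left_inj (measure_ball_pos μ _ one_pos).ne' measure_ball_lt_top.ne).1 hk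
  rw [hscale, show k = p by exact_mod_cast hkp]

theorem cpow_norm_p_smul {E : Type*} [NormedAddCommGroup E] [NormedSpace ℚ_[p] E] (s : ℂ)
    (x : E) : (‖(p : ℚ_[p]) • x‖ : ℂ) ^ s = (p : ℂ) ^ (-s) * (‖x‖ : ℂ) ^ s := by
  rw [norm_smul, Padic.norm_p, Complex.ofReal_mul,
    Complex.mul_cpow_ofReal_nonneg (by positivity) (norm_nonneg _), Complex.ofReal_inv,
    Complex.ofReal_natCast, Complex.inv_cpow _ _ (by simp [Real.pi_ne_zero.symm]),
    Complex.cpow_neg]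

theorem p_cpow_ne_zero (s : ℂ) : (p : ℂ) ^ s ≠ 0 := by
  simp [Complex.cpow_eq_zero_iff, hp.out.ne_zero]

theorem p_cpow_sub_one_ne_zero {s : ℂ} (hs : 0 < s.re) : (p : ℂ) ^ s - 1 ≠ 0 := by
  refine sub_ne_zero.2 fun h ↦ ?_
  have hnorm := congrArg norm h
  rw [Complex.norm_natCast_cpow_of_pos hp.out.pos, norm_one] at hnorm
  exact (Real.one_lt_rpow (by exact_mod_cast hp.out.one_lt) hs).ne' hnorm

theorem integrableOn_closedBall_norm_cpow [μ.IsAddHaarMeasure] {s : ℂ} (hs : -1 < s.re) :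
    IntegrableOn (fun x : ℚ_[p] ↦ (‖x‖ : ℂ) ^ s) (closedBall 0 1) μ := by
  refine integrableOn_closedBall_of_homogeneous (Nat.cast_ne_zero.2 hp.out.ne_zero)
    Padic.norm_p_lt_one map_p_smul (cpow_norm_p_smul s) ?_ ?_
  · rw [Complex.norm_natCast_cpow_of_pos hp.out.pos, Complex.neg_re]
    simpa using Real.rpow_lt_rpow_of_exponent_lt (x := p) (by exact_mod_cast hp.out.one_lt)
      (neg_lt.1 hs)
  · rw [closedBall_norm_p, closedBall_sdiff_ball]
    have hone : IntegrableOn (fun _ ↦ (1 : ℂ)) (sphere (0 : ℚ_[p]) 1) μ :=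
      integrableOn_const (isCompact_sphere _ _).measure_lt_top.ne
    exact hone.congr_fun (fun x hx ↦ by simp [mem_sphere_zero_iff_norm.1 hx])
      isClosed_sphere.measurableSet

theorem measureReal_sphere [μ.IsAddHaarMeasure] (hμ : μ (closedBall 0 1) = 1) :
    (μ.real (sphere 0 1) : ℂ) = 1 - 1 / p := by
  have hone := setIntegral_closedBall_sdiff_closedBall_of_homogeneous
    (f := fun _ : ℚ_[p] ↦ (1 : ℂ)) (c := 1) (Nat.cast_ne_zero.2 hp.out.ne_zero)
    Padic.norm_p_lt_one.le (Nat.cast_ne_zero.2 hp.out.ne_zero) (map_p_smul (μ := μ)) (by simp)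
    (integrableOn_const (by simp [hμ]))
  rw [closedBall_norm_p, closedBall_sdiff_ball] at hone
  simpa [measureReal_def, hμ] using hone

theorem setIntegral_closedBall_norm_cpow [μ.IsAddHaarMeasure] (hμ : μ (closedBall 0 1) = 1)
    {s : ℂ} (hs : -1 < s.re) :
    ∫ x in closedBall (0 : ℚ_[p]) 1, (‖x‖ : ℂ) ^ s ∂μ =
      (p - 1) * (p : ℂ) ^ s / ((p : ℂ) ^ (1 + s) - 1) := by
  have hpC : (p : ℂ) ≠ 0 := Nat.cast_ne_zero.2 hp.out.ne_zero
  have hshell := setIntegral_closedBall_sdiff_closedBall_of_homogeneous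
    (Nat.cast_ne_zero.2 hp.out.ne_zero) Padic.norm_p_lt_one.le
    (Nat.cast_ne_zero.2 hp.out.ne_zero) map_p_smul (cpow_norm_p_smul s)
    (integrableOn_closedBall_norm_cpow (μ := μ) hs)
  have hsphere : ∫ x in sphere (0 : ℚ_[p]) 1, (‖x‖ : ℂ) ^ s ∂μ = 1 - 1 / p := by
    calc ∫ x in sphere (0 : ℚ_[p]) 1, (‖x‖ : ℂ) ^ s ∂μ = ∫ _ in sphere (0 : ℚ_[p]) 1, 1 ∂μ :=
          setIntegral_congr_fun isClosed_sphere.measurableSet fun x hx ↦ by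
            simp [mem_sphere_zero_iff_norm.1 hx]
      _ = 1 - 1 / p := by
          rw [setIntegral_const, Complex.real_smul, mul_one, measureReal_sphere hμ]
  rw [closedBall_norm_p, closedBall_sdiff_ball, hsphere, Complex.cpow_neg] at hshell
  have hne := p_cpow_sub_one_ne_zero (p := p) (s := 1 + s) (by simpa using neg_lt_iff_pos_add'.1 hs)
  have hs0 := p_cpow_ne_zero (p := p) s
  rw [Complex.cpow_add _ _ hpC, Complex.cpow_one] at hne ⊢
  rw [eq_div_iff hne]
  push_cast at hshell
  field_simp at hshell
  linear_combination -hshell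

theorem map_p_smul_prod [μ.IsAddHaarMeasure] :
    (μ.prod μ).map ((p : ℚ_[p]) • ·) = (p ^ 2 : ℝ≥0) • μ.prod μ := by
  rw [map_smul_prod map_p_smul map_p_smul, sq]

theorem setIntegral_sphere_prod_of_homogeneous [μ.IsAddHaarMeasure] {f : ℚ_[p] × ℚ_[p] → ℂ} {c : ℂ}
    (hf : ∀ w, f ((p : ℚ_[p]) • w) = c * f w)
    (hint : IntegrableOn f (closedBall 0 1) (μ.prod μ)) :
    ∫ w in sphere 0 1, f w ∂(μ.prod μ) =
      (1 - c / p ^ 2) * ∫ w in closedBall 0 1, f w ∂(μ.prod μ) := by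
  have hshell := setIntegral_closedBall_sdiff_closedBall_of_homogeneous
    (Nat.cast_ne_zero.2 hp.out.ne_zero) Padic.norm_p_lt_one.le
    (pow_ne_zero 2 (Nat.cast_ne_zero.2 hp.out.ne_zero)) map_p_smul_prod hf hint
  rw [closedBall_prod_norm_p, closedBall_sdiff_ball] at hshell
  simpa using hshell

theorem measureReal_sphere_prod [μ.IsAddHaarMeasure] (hμ : μ (closedBall 0 1) = 1) :
    ((μ.prod μ).real (sphere 0 1) : ℂ) = 1 - 1 / p ^ 2 := by
  have hball : (μ.prod μ) (closedBall 0 1) = 1 := by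
    rw [← Prod.mk_zero_zero, ← closedBall_prod_same, Measure.prod_prod, hμ, one_mul]
  have hone := setIntegral_sphere_prod_of_homogeneous (μ := μ) (f := fun _ ↦ 1) (c := 1) (by simp)
    (integrableOn_const (by simp [hball]))
  simpa [measureReal_def, hball] using hone

section HomogeneousMap

variable {ℓ : ℚ_[p] × ℚ_[p] → ℚ_[p]} {s : ℂ}

theorem integrableOn_closedBall_norm_cpow_comp [μ.IsAddHaarMeasure] (hℓ : MeasurePreserving ℓ
      ((μ.prod μ).restrict (closedBall 0 1)) (μ.restrict (closedBall 0 1))) (hs : -1 < s.re) :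
    IntegrableOn (fun w ↦ (‖ℓ w‖ : ℂ) ^ s) (closedBall 0 1) (μ.prod μ) :=
  hℓ.integrable_comp_of_integrable (integrableOn_closedBall_norm_cpow hs)

theorem setIntegral_sphere_norm_cpow_comp [μ.IsAddHaarMeasure] (hμ : μ (closedBall 0 1) = 1)
    (hℓ : MeasurePreserving ℓ ((μ.prod μ).restrict (closedBall 0 1)) (μ.restrict (closedBall 0 1)))
    (hsmul : ∀ w, ℓ ((p : ℚ_[p]) • w) = (p : ℚ_[p]) • ℓ w) (hs : -1 < s.re) :
    ∫ w in sphere 0 1, (‖ℓ w‖ : ℂ) ^ s ∂(μ.prod μ) =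
      (p - 1) / p ^ 2 * (p + (p - 1) * (1 / ((p : ℂ) ^ (1 + s) - 1))) := by
  have hpC : (p : ℂ) ≠ 0 := Nat.cast_ne_zero.2 hp.out.ne_zero
  have hball : ∫ w in closedBall 0 1, (‖ℓ w‖ : ℂ) ^ s ∂(μ.prod μ) =
      (p - 1) * (p : ℂ) ^ s / ((p : ℂ) ^ (1 + s) - 1) := by
    rw [← setIntegral_closedBall_norm_cpow hμ hs, ← hℓ.map_eq, integral_map hℓ.aemeasurable
      (hℓ.map_eq.symm ▸ (integrableOn_closedBall_norm_cpow hs).aestronglyMeasurable)]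
  rw [setIntegral_sphere_prod_of_homogeneous (c := (p : ℂ) ^ (-s))
    (fun w ↦ by rw [hsmul, cpow_norm_p_smul]) (integrableOn_closedBall_norm_cpow_comp hℓ hs),
    hball, Complex.cpow_neg]
  have hne := p_cpow_sub_one_ne_zero (p := p) (s := 1 + s) (by simpa using neg_lt_iff_pos_add'.1 hs)
  have hs0 := p_cpow_ne_zero (p := p) s
  rw [add_comm, Complex.cpow_add _ _ hpC, Complex.cpow_one] at hne ⊢
  field_simp
  ring

end HomogeneousMap

section ThreeParticles

variable {a b c : ℂ}

/-- The interaction weight of three particles in `ℚ_p` with pair exponents `a`, `b`, `c`, as a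
function of the positions `w.1` and `w.2` of the first two relative to the third. -/
noncomputable def relativeWeight (a b c : ℂ) (w : ℚ_[p] × ℚ_[p]) : ℂ :=
  (‖w.1 - w.2‖ : ℂ) ^ a * (‖w.1‖ : ℂ) ^ b * (‖w.2‖ : ℂ) ^ c

theorem relativeWeight_p_smul (w : ℚ_[p] × ℚ_[p]) :
    relativeWeight a b c ((p : ℚ_[p]) • w) = (p : ℂ) ^ (-(a + b + c)) * relativeWeight a b c w := by
  have hpC : (p : ℂ) ≠ 0 := Nat.cast_ne_zero.2 hp.out.ne_zero
  simp only [relativeWeight, Prod.smul_fst, Prod.smul_snd, ← smul_sub, cpow_norm_p_smul, neg_add,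
    Complex.cpow_add _ _ hpC]
  ring

theorem relativeWeight_of_mem_sphere {w : ℚ_[p] × ℚ_[p]} (hw : w ∈ sphere 0 1) :
    relativeWeight a b c w =
      (‖w.1 - w.2‖ : ℂ) ^ a + (‖w.1‖ : ℂ) ^ b + (‖w.2‖ : ℂ) ^ c - 2 := by
  have hmax : max ‖w.1‖ ‖w.2‖ = 1 := mem_sphere_zero_iff_norm.1 hw
  by_cases heq : ‖w.1‖ = ‖w.2‖
  · rw [← heq, max_self] at hmax
    simp only [relativeWeight, ← heq, hmax, Complex.ofReal_one, Complex.one_cpow]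
    ring
  · have hsub : ‖w.1 - w.2‖ = 1 := by
      rw [sub_eq_add_neg, IsUltrametricDist.norm_add_eq_max_of_norm_ne_norm (by rwa [norm_neg]),
        norm_neg, hmax]
    rcases max_choice ‖w.1‖ ‖w.2‖ with h | h <;> rw [hmax] at h <;>
      simp only [relativeWeight, hsub, ← h, Complex.ofReal_one, Complex.one_cpow] <;> ring

theorem integrableOn_closedBall_norm_cpow_add_add [μ.IsAddHaarMeasure]
    (hμ : μ (closedBall 0 1) = 1) (ha : -1 < a.re) (hb : -1 < b.re) (hc : -1 < c.re) :
    IntegrableOn (fun w : ℚ_[p] × ℚ_[p] ↦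
      (‖w.1 - w.2‖ : ℂ) ^ a + (‖w.1‖ : ℂ) ^ b + (‖w.2‖ : ℂ) ^ c) (closedBall 0 1) (μ.prod μ) :=
  ((integrableOn_closedBall_norm_cpow_comp (measurePreserving_fst_sub_snd_closedBall hμ) ha).add
    (integrableOn_closedBall_norm_cpow_comp (measurePreserving_fst_closedBall hμ) hb)).add
    (integrableOn_closedBall_norm_cpow_comp (measurePreserving_snd_closedBall hμ) hc)

theorem integrableOn_sphere_relativeWeight [μ.IsAddHaarMeasure] (hμ : μ (closedBall 0 1) = 1)
    (ha : -1 < a.re) (hb : -1 < b.re) (hc : -1 < c.re) :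
    IntegrableOn (relativeWeight a b c) (sphere 0 1) (μ.prod μ) := by
  have hadd := (integrableOn_closedBall_norm_cpow_add_add hμ ha hb hc).mono_set
    sphere_subset_closedBall
  have htwo : IntegrableOn (fun _ ↦ (2 : ℂ)) (sphere (0 : ℚ_[p] × ℚ_[p]) 1) (μ.prod μ) :=
    integrableOn_const (isCompact_sphere _ _).measure_lt_top.ne
  exact (hadd.sub htwo).congr_fun (fun w hw ↦ (relativeWeight_of_mem_sphere hw).symm)
    isClosed_sphere.measurableSet

theorem setIntegral_sphere_relativeWeight [μ.IsAddHaarMeasure] (hμ : μ (closedBall 0 1) = 1)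
    (ha : -1 < a.re) (hb : -1 < b.re) (hc : -1 < c.re) :
    ∫ w in sphere 0 1, relativeWeight a b c w ∂(μ.prod μ) =
      (((p : ℂ) - 1) * (p - 2) + ((p : ℂ) - 1) ^ 2 *
        (1 / ((p : ℂ) ^ (1 + a) - 1) + 1 / ((p : ℂ) ^ (1 + b) - 1) +
          1 / ((p : ℂ) ^ (1 + c) - 1))) / p ^ 2 := by
  have hpC : (p : ℂ) ≠ 0 := Nat.cast_ne_zero.2 hp.out.ne_zero
  have hsub := measurePreserving_fst_sub_snd_closedBall hμ
  have hfst := measurePreserving_fst_closedBall hμ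
  have hsnd := measurePreserving_snd_closedBall hμ
  have hle : sphere (0 : ℚ_[p] × ℚ_[p]) 1 ⊆ closedBall 0 1 := sphere_subset_closedBall
  have hA := (integrableOn_closedBall_norm_cpow_comp hsub ha).mono_set hle
  have hB := (integrableOn_closedBall_norm_cpow_comp hfst hb).mono_set hle
  have hC := (integrableOn_closedBall_norm_cpow_comp hsnd hc).mono_set hle
  have hABC := (integrableOn_closedBall_norm_cpow_add_add hμ ha hb hc).mono_set hle
  have htwo : IntegrableOn (fun _ ↦ (2 : ℂ)) (sphere (0 : ℚ_[p] × ℚ_[p]) 1) (μ.prod μ) :=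
    integrableOn_const (isCompact_sphere _ _).measure_lt_top.ne
  rw [setIntegral_congr_fun isClosed_sphere.measurableSet fun w ↦ relativeWeight_of_mem_sphere,
    integral_sub hABC htwo, integral_add (by exact hA.add hB) hC, integral_add hA hB,
    setIntegral_sphere_norm_cpow_comp hμ hsub (fun w ↦ (smul_sub _ _ _).symm) ha,
    setIntegral_sphere_norm_cpow_comp hμ hfst (fun _ ↦ rfl) hb,
    setIntegral_sphere_norm_cpow_comp hμ hsnd (fun _ ↦ rfl) hc,
    setIntegral_const, Complex.real_smul, measureReal_sphere_prod hμ]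
  field_simp
  ring

theorem integrableOn_closedBall_relativeWeight [μ.IsAddHaarMeasure] (hμ : μ (closedBall 0 1) = 1)
    (ha : -1 < a.re) (hb : -1 < b.re) (hc : -1 < c.re) (habc : -2 < (a + b + c).re) :
    IntegrableOn (relativeWeight a b c) (closedBall 0 1) (μ.prod μ) := by
  refine integrableOn_closedBall_of_homogeneous (Nat.cast_ne_zero.2 hp.out.ne_zero)
    Padic.norm_p_lt_one map_p_smul_prod relativeWeight_p_smul ?_ ?_
  · rw [Complex.norm_natCast_cpow_of_pos hp.out.pos, Complex.neg_re]
    simpa using Real.rpow_lt_rpow_of_exponent_lt (x := p) (by exact_mod_cast hp.out.one_lt)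
      (neg_lt.1 habc)
  · rw [closedBall_prod_norm_p, closedBall_sdiff_ball]
    exact integrableOn_sphere_relativeWeight hμ ha hb hc

theorem setIntegral_closedBall_relativeWeight [μ.IsAddHaarMeasure] (hμ : μ (closedBall 0 1) = 1)
    (ha : -1 < a.re) (hb : -1 < b.re) (hc : -1 < c.re) (habc : -2 < (a + b + c).re) :
    ∫ w in closedBall 0 1, relativeWeight a b c w ∂(μ.prod μ) =
      (p : ℂ) ^ (a + b + c) / ((p : ℂ) ^ (2 + (a + b + c)) - 1) *
        (((p : ℂ) - 1) * (p - 2) + ((p : ℂ) - 1) ^ 2 *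
          (1 / ((p : ℂ) ^ (1 + a) - 1) + 1 / ((p : ℂ) ^ (1 + b) - 1) +
            1 / ((p : ℂ) ^ (1 + c) - 1))) := by
  have hpC : (p : ℂ) ≠ 0 := Nat.cast_ne_zero.2 hp.out.ne_zero
  have hshell := setIntegral_sphere_prod_of_homogeneous relativeWeight_p_smul
    (integrableOn_closedBall_relativeWeight hμ ha hb hc habc)
  rw [setIntegral_sphere_relativeWeight hμ ha hb hc, Complex.cpow_neg] at hshell
  have hne := p_cpow_sub_one_ne_zero (p := p) (s := 2 + (a + b + c))
    (by simpa using neg_lt_iff_pos_add'.1 habc)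
  have hs0 := p_cpow_ne_zero (p := p) (a + b + c)
  rw [Complex.cpow_add 2 _ hpC, Complex.cpow_ofNat] at hne ⊢
  generalize (p : ℂ) ^ (a + b + c) = q at *
  generalize ((p : ℂ) - 1) * (p - 2) + _ = N at *
  rw [div_mul_eq_mul_div, eq_div_iff hne]
  field_simp at hshell
  linear_combination -hshell

end ThreeParticles

end Padic

theorem statement_19_general (p : ℕ) [Fact p.Prime] (μ : Measure ℚ_[p]) [μ.IsAddHaarMeasure]
    (hμ : μ (Zball p) = 1) (a b c : ℂ) (ha : -1 < a.re) (hb : -1 < b.re) (hc : -1 < c.re)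
    (habc : -2 < (a + b + c).re) :
    Integrable
      (fun x : Fin 3 → ℚ_[p] ↦
        (‖x 0 - x 1‖ : ℂ) ^ a * (‖x 0 - x 2‖ : ℂ) ^ b * (‖x 1 - x 2‖ : ℂ) ^ c)
      (Measure.pi fun _ ↦ μ.restrict (Zball p)) ∧
    (∫ x : Fin 3 → ℚ_[p],
        (‖x 0 - x 1‖ : ℂ) ^ a * (‖x 0 - x 2‖ : ℂ) ^ b * (‖x 1 - x 2‖ : ℂ) ^ c
        ∂(Measure.pi fun _ ↦ μ.restrict (Zball p))) =
      (p : ℂ) ^ (a + b + c) / ((p : ℂ) ^ (2 + (a + b + c)) - 1) *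
        (((p : ℂ) - 1) * ((p : ℂ) - 2) + ((p : ℂ) - 1) ^ 2 *
          (1 / ((p : ℂ) ^ (1 + a) - 1) + 1 / ((p : ℂ) ^ (1 + b) - 1) +
            1 / ((p : ℂ) ^ (1 + c) - 1))) := by
  have hZ : Zball p = closedBall 0 1 := by ext x; simp [Zball]
  rw [hZ] at hμ ⊢
  have hrel := measurePreserving_relative_positions hμ
  have hint := integrableOn_closedBall_relativeWeight hμ ha hb hc habc
  have hweight (x : Fin 3 → ℚ_[p]) :
      (‖x 0 - x 1‖ : ℂ) ^ a * (‖x 0 - x 2‖ : ℂ) ^ b * (‖x 1 - x 2‖ : ℂ) ^ c =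
        relativeWeight a b c (x 0 - x 2, x 1 - x 2) := by
    rw [relativeWeight, sub_sub_sub_cancel_right]
  simp_rw [hweight]
  refine ⟨hrel.integrable_comp_of_integrable hint, ?_⟩
  rw [← setIntegral_closedBall_relativeWeight hμ ha hb hc habc, ← hrel.map_eq,
    integral_map hrel.aemeasurable (hrel.map_eq.symm ▸ hint.aestronglyMeasurable)]

theorem statement_19 (p : ℕ) [Fact p.Prime]
    (μ : Measure ℚ_[p]) [SigmaFinite μ] [μ.IsAddHaarMeasure] (hμ : μ (Zball p) = 1)
    (β : ℂ) (hβ : -(1 / 6 : ℝ) < β.re) :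
    Integrable
      (fun x : Fin 3 → ℚ_[p] =>
        (‖x 0 - x 1‖ : ℂ) ^ (2 * β) * (‖x 0 - x 2‖ : ℂ) ^ (3 * β) *
          (‖x 1 - x 2‖ : ℂ) ^ (6 * β))
      (Measure.pi fun _ => μ.restrict (Zball p)) ∧
    (∫ x : Fin 3 → ℚ_[p],
        (‖x 0 - x 1‖ : ℂ) ^ (2 * β) * (‖x 0 - x 2‖ : ℂ) ^ (3 * β) *
          (‖x 1 - x 2‖ : ℂ) ^ (6 * β)
        ∂(Measure.pi fun _ => μ.restrict (Zball p))) =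
      (p : ℂ) ^ (11 * β) / ((p : ℂ) ^ (2 + 11 * β) - 1) *
        (((p : ℂ) - 1) * ((p : ℂ) - 2) + ((p : ℂ) - 1) ^ 2 *
          (1 / ((p : ℂ) ^ (1 + 2 * β) - 1) + 1 / ((p : ℂ) ^ (1 + 3 * β) - 1) +
            1 / ((p : ℂ) ^ (1 + 6 * β) - 1))) := by
  obtain ⟨ha, hb, hc, hsum⟩ : -1 < (2 * β).re ∧ -1 < (3 * β).re ∧ -1 < (6 * β).re ∧
      -2 < (2 * β + 3 * β + 6 * β).re := by
    norm_num at hβ ⊢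
    refine ⟨?_, ?_, ?_, ?_⟩ <;> linarith
  simpa only [show 2 * β + 3 * β + 6 * β = 11 * β by ring] using
    statement_19_general p μ hμ (2 * β) (3 * β) (6 * β) ha hb hc hsum

end LogCoulomb
end
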